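/- arXiv:1610.05898 — 4 statements merged into one kernel-verified Lean document; each statement's English description precedes it below -/
import Mathlib

section
/- Let D be the Levi-Civita connection of a pseudo-Kähler or para-Kähler structure (g, J, Ω) on a symplectic manifold of dimension 2n > 2. Then: (1) the symplectic Weyl tensor of D is trace-free with respect to the metric g (i.e. g^{ab}W_{iab}{}^{p}g_{pj} = 0) if and only if g is Einstein; (2) the symplectic Weyl tensor of D vanishes if and only if (g, J, Ω) has constant (para-)holomorphic sectional curvature. -/
/- Chart model of a symplectic manifold: the manifold is modeled by (a global affine chart of)
a finite-dimensional real normed vector space `E`; a symplectic form is a smooth field of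
nondegenerate antisymmetric bilinear forms (closedness is automatic in the presence of a
compatible torsion-free connection), and a symplectic connection is recorded by its
(torsion-free) Christoffel symbols, preserving the symplectic form. -/

structure SympForm (E : Type*) [NormedAddCommGroup E] [NormedSpace ℝ E] where
  ω : E → E →L[ℝ] E →L[ℝ] ℝ
  smooth : ContDiff ℝ (⊤ : ℕ∞) ω
  skew : ∀ x u v, ω x u v = - ω x v u
  nondeg : ∀ x u, (∀ v, ω x u v = 0) → u = 0

structure SympConnection {E : Type*} [NormedAddCommGroup E] [NormedSpace ℝ E]
    (Ω : SympForm E) where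
  Γ : E → E →L[ℝ] E →L[ℝ] E
  smooth : ContDiff ℝ (⊤ : ℕ∞) Γ
  symm : ∀ x u v, Γ x u v = Γ x v u
  parallel : ∀ x u v w, fderiv ℝ Ω.ω x u v w = Ω.ω x (Γ x u v) w + Ω.ω x v (Γ x u w)

variable {E : Type*} [NormedAddCommGroup E] [NormedSpace ℝ E]

/-- Curvature `R(u,v)w = ∇_u∇_v w - ∇_v∇_u w - ∇_{[u,v]}w` of a symplectic connection,
evaluated on constant vector fields of the chart, as an operator in `w`. -/
noncomputable def curvOp {Ω : SympForm E} (C : SympConnection Ω) (x u v : E) : E →L[ℝ] E :=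
  fderiv ℝ C.Γ x u v - fderiv ℝ C.Γ x v u
    + (C.Γ x u).comp (C.Γ x v) - (C.Γ x v).comp (C.Γ x u)

/-- Lowered curvature `R_{ijkl} = R_{ijk}{}^p Ω_{pl}`, i.e. `Ω(R(u,v)w, z)`. -/
noncomputable def Rlow {Ω : SympForm E} (C : SympConnection Ω) (x u v w z : E) : ℝ :=
  Ω.ω x (curvOp C x u v w) z

/-- The symplectic curvature quadratic form `scurv_{x,L}(Z)` of the plane `L` spanned by `X, Y`. -/
noncomputable def scurv {Ω : SympForm E} (C : SympConnection Ω) (x X Y Z : E) : ℝ :=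
  Rlow C x X Y Z Z / Ω.ω x X Y

/-- Ricci tensor `R_{ij} = R_{pij}{}^p`: the trace of `w ↦ R(w,u)v`. -/
noncomputable def ricci {Ω : SympForm E} (C : SympConnection Ω) (x u v : E) : ℝ :=
  LinearMap.trace ℝ E
    ((((fderiv ℝ C.Γ x).flip u).flip v - ((fderiv ℝ C.Γ x) u).flip v
      + (C.Γ x).flip (C.Γ x u v) - (C.Γ x u).comp ((C.Γ x).flip v)).toLinearMap)

/-- Covariant derivative `(∇_w Ric)(u,v)` of the Ricci tensor. -/
noncomputable def covDerivRic {Ω : SympForm E} (C : SympConnection Ω) (x w u v : E) : ℝ :=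
  fderiv ℝ (fun y => ricci C y u v) x w - ricci C x (C.Γ x w u) v - ricci C x u (C.Γ x w v)

/-- Covariant derivative `(∇_a R)(u,v,w,z)` of the (lowered) curvature tensor. -/
noncomputable def covDerivR {Ω : SympForm E} (C : SympConnection Ω) (x a u v w z : E) : ℝ :=
  fderiv ℝ (fun y => Rlow C y u v w z) x a
    - Rlow C x (C.Γ x a u) v w z - Rlow C x u (C.Γ x a v) w z
    - Rlow C x u v (C.Γ x a w) z - Rlow C x u v w (C.Γ x a z)

/-- `∇` is locally symmetric: `∇R = 0`. -/
def LocallySymmetric {Ω : SympForm E} (C : SympConnection Ω) : Prop :=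
  ∀ x a u v w z, covDerivR C x a u v w z = 0

/-- The Ricci tensor is parallel. -/
def ParallelRicci {Ω : SympForm E} (C : SympConnection Ω) : Prop :=
  ∀ x w u v, covDerivRic C x w u v = 0

/-- The symplectic Weyl tensor
`W_{ijkl} = R_{ijkl} − (1/(n+1))(Ω_{i(k}R_{l)j} − Ω_{j(k}R_{l)i} + Ω_{ij}R_{kl})`
on a manifold of dimension `2n`. -/
noncomputable def weyl (n : ℕ) {Ω : SympForm E} (C : SympConnection Ω) (x u v w z : E) : ℝ :=
  Rlow C x u v w z - (1 / ((n : ℝ) + 1)) *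
    ((Ω.ω x u w * ricci C x z v + Ω.ω x u z * ricci C x w v) / 2
      - (Ω.ω x v w * ricci C x z u + Ω.ω x v z * ricci C x w u) / 2
      + Ω.ω x u v * ricci C x w z)

/-- `∇` is Weyl flat (of Ricci type): its symplectic Weyl tensor vanishes. -/
def WeylFlat (n : ℕ) {Ω : SympForm E} (C : SympConnection Ω) : Prop :=
  ∀ x u v w z, weyl n C x u v w z = 0

/-- `∇` is preferred: `∇_{(i}R_{jk)} = 0` (cyclic symmetrization suffices since `Ric` is
symmetric in its last two arguments). -/
def Preferred {Ω : SympForm E} (C : SympConnection Ω) : Prop :=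
  ∀ x u v w, covDerivRic C x u v w + covDerivRic C x v w u + covDerivRic C x w u v = 0

/-- Vanishing of the curvature one-form `ρ_i = ∇^p R_{ip}`: the index is raised with `Ω`, and
the `Ω`-contraction is encoded as the trace of any linear packaging `D` of `∇Ric` against `Ω`
(such a `D` exists and is unique by nondegeneracy of `Ω`). -/
def RhoZero {Ω : SympForm E} (C : SympConnection Ω) : Prop :=
  ∀ x u, ∀ D : E →ₗ[ℝ] E,
    (∀ w v, Ω.ω x (D w) v = covDerivRic C x w u v) → LinearMap.trace ℝ E D = 0

/-- `A` is a parallel symmetric covariant 2-tensor field. -/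
def IsParallelSym2 {Ω : SympForm E} (C : SympConnection Ω)
    (A : E → E →L[ℝ] E →L[ℝ] ℝ) : Prop :=
  (∀ x u v, A x u v = A x v u) ∧ Differentiable ℝ A ∧
    ∀ x u v w, fderiv ℝ A x u v w = A x (C.Γ x u v) w + A x v (C.Γ x u w)

/-- `∇` has constant symplectic sectional curvature: there is a parallel symmetric 2-tensor `A`
such that on every 2-dimensional symplectic subspace (spanned by `X, Y` with `Ω(X,Y) ≠ 0`)
the symplectic curvature quadratic form is the restriction of the quadratic form of `A`. -/
def HasConstScurv {Ω : SympForm E} (C : SympConnection Ω) : Prop :=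
  ∃ A : E → E →L[ℝ] E →L[ℝ] ℝ, IsParallelSym2 C A ∧
    ∀ x X Y, Ω.ω x X Y ≠ 0 →
      ∀ Z ∈ Submodule.span ℝ ({X, Y} : Set E), scurv C x X Y Z = A x Z Z

/-- Lie bracket of vector fields on the chart. -/
noncomputable def lieVF (X Y : E → E) (x : E) : E :=
  fderiv ℝ Y x (X x) - fderiv ℝ X x (Y x)

/-- Covariant derivative `∇_X Y` of vector fields on the chart. -/
noncomputable def covVF {Ω : SympForm E} (C : SympConnection Ω) (X Y : E → E) (x : E) : E :=
  fderiv ℝ Y x (X x) + C.Γ x (X x) (Y x)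

/-- Nijenhuis tensor of an endomorphism field, evaluated on constant vector fields. -/
noncomputable def nijTensor (A : E → E → E) (x u v : E) : E :=
  lieVF (fun y => A y u) (fun y => A y v) x
    - A x (lieVF (fun y => A y u) (fun _ => v) x)
    - A x (lieVF (fun _ => u) (fun y => A y v) x)
    + A x (A x (lieVF (fun _ => u) (fun _ => v) x))

/-- Covariant derivative along a curve `γ` of a field `V` along `γ`. -/
noncomputable def covAlong {Ω : SympForm E} (C : SympConnection Ω) (γ V : ℝ → E) (t : ℝ) : E :=
  deriv V t + C.Γ (γ t) (deriv γ t) (V t)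

/-- `(g,J,Ω)` has constant (para-)holomorphic sectional curvature `4c`:
`R_{ijkl} = 2c(Ω_{i(k}g_{l)j} − Ω_{j(k}g_{l)i} + Ω_{ij}g_{kl})`. -/
def ConstHoloSec {Ω : SympForm E} (C : SympConnection Ω) (g : E → E → E → ℝ) (c : ℝ) : Prop :=
  ∀ x u v w z, Rlow C x u v w z =
    2 * c * ((Ω.ω x u w * g x z v + Ω.ω x u z * g x w v) / 2
      - (Ω.ω x v w * g x z u + Ω.ω x v z * g x w u) / 2
      + Ω.ω x u v * g x w z)

/-- `C` is the Levi-Civita connection of the metric `g`: `C` is torsion free and `∇g = 0`. -/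
def IsLeviCivita {Ω : SympForm E} (C : SympConnection Ω) (g : E → E → E → ℝ) : Prop :=
  ∀ x u v w, fderiv ℝ (fun y => g y v w) x u = g x (C.Γ x u v) w + g x v (C.Γ x u w)

section AlgebraPart

open LinearMap

/-- Pointwise algebraic data of a (para-)Kähler curvature tensor. -/
structure KAlg (V : Type*) [AddCommGroup V] [Module ℝ V] where
  g : V →ₗ[ℝ] V →ₗ[ℝ] ℝ
  J : V →ₗ[ℝ] V
  R : V →ₗ[ℝ] V →ₗ[ℝ] V →ₗ[ℝ] V
  ε : ℝ
  hε : ε * ε = 1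
  gsymm : ∀ u v, g u v = g v u
  gnd : ∀ u, (∀ v, g u v = 0) → u = 0
  JJ : ∀ u, J (J u) = ε • u
  Jskew : ∀ u v, g (J u) v = - g u (J v)
  Rskew : ∀ u v w, R u v w = - R v u w
  Rbi : ∀ u v w, R u v w + R v w u + R w u v = 0
  Rg : ∀ u v w z, g (R u v w) z + g w (R u v z) = 0
  RΩ : ∀ u v w z, g (J (R u v w)) z + g (J w) (R u v z) = 0

namespace KAlg

variable {V : Type*} [AddCommGroup V] [Module ℝ V] (K : KAlg V)

/-- Ricci tensor. -/
noncomputable def ric : V →ₗ[ℝ] V →ₗ[ℝ] ℝ :=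
  LinearMap.mk₂ ℝ (fun u v => LinearMap.trace ℝ V ((K.R.flip u).flip v))
    (by intro a b c; rw [← map_add]; congr 1; ext w; simp)
    (by intro a b c; rw [← map_smul]; congr 1; ext w; simp)
    (by intro a b c; rw [← map_add]; congr 1; ext w; simp)
    (by intro a b c; rw [← map_smul]; congr 1; ext w; simp)

theorem ric_apply (u v : V) : K.ric u v = LinearMap.trace ℝ V ((K.R.flip u).flip v) := rfl

theorem ext_g {a b : V} (h : ∀ z, K.g a z = K.g b z) : a = b := by
  rw [← sub_eq_zero]
  apply K.gnd
  intro v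
  simp [h v]

theorem R_J (u v w : V) : K.R u v (K.J w) = K.J (K.R u v w) := by
  apply K.ext_g
  intro z
  have h1 := K.RΩ u v w z
  have h2 := K.Rg u v (K.J w) z
  linarith

theorem pair_symm (u v w z : V) : K.g (K.R u v w) z = K.g (K.R w z u) v := by
  have sk : ∀ a b c d, K.g (K.R a b c) d = - K.g (K.R b a c) d := by
    intro a b c d
    rw [K.Rskew a b c]; simp
  have sk2 : ∀ a b c d, K.g (K.R a b c) d = - K.g (K.R a b d) c := by
    intro a b c d
    have := K.Rg a b c d
    rw [K.gsymm c] at this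
    linarith
  have bi : ∀ a b c d, K.g (K.R a b c) d + K.g (K.R b c a) d + K.g (K.R c a b) d = 0 := by
    intro a b c d
    have := congrArg (fun t => K.g t d) (K.Rbi a b c)
    simpa using this
  linarith [bi u v w z, bi v w z u, bi w z u v, bi z u v w,
    sk u v w z, sk v w u z, sk w u v z, sk v w z u, sk w z v u, sk z v w u,
    sk w z u v, sk z u w v, sk u w z v, sk z u v w, sk u v z w, sk v z u w,
    sk2 u v w z, sk2 v w u z, sk2 w u v z, sk2 w z u v, sk2 z u v w, sk2 v z u w,
    sk2 v w z u, sk2 w z v u, sk2 z v w u, sk2 z u w v, sk2 u w z v]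

theorem R_JJ (u v w : V) : K.R (K.J u) v w = - K.R u (K.J v) w := by
  apply K.ext_g
  intro z
  rw [K.pair_symm, K.R_J, K.Jskew, ← K.pair_symm]
  simp

section fd
variable [FiniteDimensional ℝ V]

theorem g_inj : Function.Injective K.g := by
  intro a b h
  apply K.ext_g
  intro z
  rw [h]

/-- `g` as an equivalence with the dual. -/
noncomputable def G : V ≃ₗ[ℝ] Module.Dual ℝ V :=
  LinearMap.linearEquivOfInjective K.g K.g_inj (Subspace.dual_finrank_eq).symm

theorem G_apply (u v : V) : K.G u v = K.g u v := by
  simp [G]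

theorem trace_skew (A : V →ₗ[ℝ] V) (h : ∀ u v, K.g (A u) v + K.g u (A v) = 0) :
    LinearMap.trace ℝ V A = 0 := by
  have h1 : K.G.conj A = (-1 : ℝ) • Module.Dual.transpose A := by
    ext f v
    obtain ⟨u, rfl⟩ := K.G.surjective f
    have := h u v
    simp only [LinearEquiv.conj_apply_apply, LinearEquiv.symm_apply_apply, G_apply,
      LinearMap.smul_apply, smul_eq_mul, Module.Dual.transpose_apply, LinearMap.comp_apply]
    linarith
  have h2 := LinearMap.trace_conj' A K.G
  rw [h1, map_smul, LinearMap.trace_transpose', smul_eq_mul] at h2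
  linarith

theorem trace_R (u v : V) : LinearMap.trace ℝ V (K.R u v) = 0 :=
  K.trace_skew _ (K.Rg u v)

theorem trace_J : LinearMap.trace ℝ V K.J = 0 :=
  K.trace_skew _ (fun u v => by rw [K.Jskew]; ring)

theorem ric_symm (u v : V) : K.ric u v = K.ric v u := by
  have h : (K.R.flip u).flip v + K.R u v - (K.R.flip v).flip u = 0 := by
    ext w
    have h1 := K.Rbi w u v
    rw [K.Rskew v w u] at h1
    simp only [LinearMap.sub_apply, LinearMap.add_apply, LinearMap.flip_apply,
      LinearMap.zero_apply]
    rw [← h1]; abel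
  have h2 := congrArg (LinearMap.trace ℝ V) h
  rw [map_sub, map_add, K.trace_R, map_zero, ← ric_apply, ← ric_apply] at h2
  linarith

theorem trace_RJ (u v : V) :
    LinearMap.trace ℝ V ((K.R.flip u).flip v ∘ₗ K.J) = K.ric u (K.J v) := by
  rw [LinearMap.trace_comp_comm', ric_apply]
  congr 1
  ext w
  simp [K.R_J]

theorem ric_J (u v : V) : K.ric (K.J u) v = - K.ric u (K.J v) := by
  rw [← trace_RJ, ric_apply, ← map_neg]
  congr 1
  ext w
  simp [K.R_JJ]

theorem trace_JR (u v : V) :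
    LinearMap.trace ℝ V (K.J ∘ₗ K.R u v) = -2 * K.ric u (K.J v) := by
  have h : K.J ∘ₗ K.R u v - (K.R.flip v).flip u ∘ₗ K.J + (K.R.flip u).flip v ∘ₗ K.J = 0 := by
    ext w
    have h1 := K.Rbi u v (K.J w)
    rw [K.Rskew v (K.J w) u, K.R_J] at h1
    simp only [LinearMap.sub_apply, LinearMap.add_apply, LinearMap.flip_apply,
      LinearMap.zero_apply, LinearMap.comp_apply]
    rw [← h1]; abel
  have h2 := congrArg (LinearMap.trace ℝ V) h
  rw [map_add, map_sub, map_zero, trace_RJ, trace_RJ] at h2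
  have h3 := K.ric_J u v
  rw [K.ric_symm (K.J u)] at h3
  linarith

/-- The algebraic curvature tensor built from a symmetric form. -/
noncomputable def Kt (A : V →ₗ[ℝ] V →ₗ[ℝ] ℝ) (u v w z : V) : ℝ :=
  (K.g (K.J u) w * A z v + K.g (K.J u) z * A w v) / 2
    - (K.g (K.J v) w * A z u + K.g (K.J v) z * A w u) / 2 + K.g (K.J u) v * A w z

/-- Ricci endomorphism. -/
noncomputable def P : V →ₗ[ℝ] V := K.G.symm.toLinearMap ∘ₗ K.ric

theorem g_P (u v : V) : K.g (K.P u) v = K.ric u v := by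
  rw [← G_apply]; simp [P]

theorem trace_W (m : ℝ) (u v : V) (D : V →ₗ[ℝ] V)
    (hD : ∀ a b, K.g (D a) b =
      -K.ε * (K.g (K.J (K.R u a b)) (K.J v) - m * K.Kt K.ric u a b (K.J v))) :
    LinearMap.trace ℝ V D =
      (1 - m) * K.ric u v - m / 2 * LinearMap.trace ℝ V K.P * K.g u v := by
  set z := K.J v with hz
  have hDe : D = (-K.ε) • (-((K.R.flip u).flip (K.J z))
      - m • ((1/2 : ℝ) • (K.ric z).smulRight (K.J u)
        + (K.g (K.J u) z / 2) • K.P - (K.ric z u / 2) • K.J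
        + (1/2 : ℝ) • (K.g (K.J z)).smulRight (K.P u)
        + (K.g (K.J u)).smulRight (K.P z))) := by
    ext a
    apply K.ext_g
    intro b
    rw [hD]
    have h1 : K.g (K.J (K.R u a b)) z = - K.g (K.R a u (K.J z)) b := by
      have h2 := K.Rg u a b (K.J z)
      rw [K.Jskew, K.gsymm (K.R a u (K.J z)), K.Rskew a u, map_neg]
      linarith
    have h3 : K.g (K.J z) a = - K.g (K.J a) z := by
      rw [K.Jskew, K.gsymm]
    have h4 := K.ric_symm a b
    have h5 := K.ric_symm u b
    have h6 := K.ric_symm z b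
    simp only [Kt, h1, LinearMap.sub_apply, LinearMap.add_apply, LinearMap.smul_apply,
      LinearMap.neg_apply, LinearMap.flip_apply, LinearMap.smulRight_apply, map_smul, map_sub,
      map_add, map_neg, smul_eq_mul, g_P, h3, h4, h5, h6]
    ring
  have e1 : K.g (K.J z) (K.P u) = K.ε * K.ric u v := by
    rw [hz, K.JJ, K.gsymm, map_smul, g_P]; simp
  have e2 : K.g (K.J u) (K.P z) = - K.ε * K.ric u v := by
    rw [K.gsymm, g_P, hz, K.ric_J, K.JJ, map_smul, K.ric_symm]; simp
  have e3 : K.ric z (K.J u) = - K.ε * K.ric u v := by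
    rw [← e2, K.gsymm, g_P]
  have e4 : K.ric u (K.J z) = K.ε * K.ric u v := by
    rw [hz, K.JJ]; simp
  have e5 : K.g (K.J u) z = - K.ε * K.g u v := by
    rw [hz, K.Jskew, K.JJ]; simp
  rw [hDe]
  simp only [map_smul, map_sub, map_add, map_neg, LinearMap.trace_smulRight, smul_eq_mul,
    ← ric_apply, K.trace_J, e1, e2, e3, e4, e5]
  linear_combination ((1 - m) * K.ric u v - m / 2 * LinearMap.trace ℝ V K.P * K.g u v) * K.hε

theorem ric_const (n : ℕ) (hdim : Module.finrank ℝ V = 2 * n) (c : ℝ)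
    (h : ∀ u v w z, K.g (K.J (K.R u v w)) z = 2 * c * K.Kt K.g u v w z) (u v : V) :
    K.ric u v = 2 * c * (n + 1) * K.g u v := by
  have hR : (K.R.flip u).flip v = (2 * c * K.ε) •
      ((-1/2 : ℝ) • (K.g (K.J v)).smulRight (K.J u) 
        + (K.ε * K.g u v / 2) • LinearMap.id - (K.g (K.J u) v / 2) • K.J
        - (K.ε / 2) • (K.g v).smulRight u - (K.g (K.J u)).smulRight (K.J v)) := by
    ext w
    apply K.ext_g
    intro b
    have h0 := h w u v (K.J b)
    rw [K.Jskew, K.JJ] at h0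
    have hb : K.g (K.R w u v) b = - K.ε * (2 * c * K.Kt K.g w u v (K.J b)) := by
      rw [← h0]; simp; linear_combination (- K.g (K.R w u v) b) * K.hε
    have a1 : K.g (K.J w) v = - K.g (K.J v) w := by rw [K.Jskew, K.gsymm]
    have a2 : K.g (K.J w) u = - K.g (K.J u) w := by rw [K.Jskew, K.gsymm]
    have a3 : ∀ t, K.g (K.J t) (K.J b) = - K.ε * K.g t b := by
      intro t; rw [K.Jskew, K.JJ]; simp
    have a4 : ∀ t, K.g (K.J b) t = - K.g (K.J t) b := by
      intro t; rw [K.Jskew, K.gsymm]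
    have a5 : ∀ t, K.g t (K.J b) = - K.g (K.J t) b := by
      intro t; rw [K.Jskew]; simp
    have a6 := K.gsymm v u
    simp only [LinearMap.flip_apply, hb, Kt, a1, a2, a3, a4, a5, a6, LinearMap.sub_apply,
      LinearMap.add_apply, LinearMap.smul_apply,
      LinearMap.smulRight_apply, map_smul, map_sub, LinearMap.id_apply,
      map_add, smul_eq_mul]
    ring
  have b1 : K.g (K.J v) (K.J u) = - K.ε * K.g u v := by
    rw [K.Jskew, K.JJ, K.gsymm u v]; simp
  have b2 : K.g (K.J u) (K.J v) = - K.ε * K.g u v := by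
    rw [K.Jskew, K.JJ]; simp
  rw [ric_apply, hR]
  simp only [map_smul, map_sub, map_add, LinearMap.trace_smulRight, smul_eq_mul,
    K.trace_J, LinearMap.trace_id, hdim, b1, b2, K.gsymm v u]
  push_cast
  linear_combination (2 * c * (n + 1) * K.g u v) * K.hε

end fd

end KAlg

end AlgebraPart

section AnalysisPart

set_option synthInstance.maxHeartbeats 200000
set_option synthInstance.maxSize 1000
set_option maxSynthPendingDepth 3

/-- The curvature of a connection preserving `B` is skew with respect to `B`. -/
theorem curv_skew {E : Type*} [NormedAddCommGroup E] [NormedSpace ℝ E]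
    {Ω : SympForm E} (C : SympConnection Ω) (B : E → E →L[ℝ] E →L[ℝ] ℝ)
    (hBs : ContDiff ℝ (⊤ : ℕ∞) B)
    (hB : ∀ x u v w, fderiv ℝ B x u v w = B x (C.Γ x u v) w + B x v (C.Γ x u w))
    (x u v w z : E) :
    B x (curvOp C x u v w) z + B x w (curvOp C x u v z) = 0 := by
  have dB : ∀ y, HasFDerivAt B (fderiv ℝ B y) y := fun y =>
    (hBs.differentiable (by simp) y).hasFDerivAt
  have dΓ : HasFDerivAt C.Γ (fderiv ℝ C.Γ x) x :=
    (C.smooth.differentiable (by simp) x).hasFDerivAt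
  have hB2 : ContDiff ℝ (1 : ℕ∞) (fderiv ℝ B) := hBs.fderiv_right (by norm_cast)
  have ddB : HasFDerivAt (fderiv ℝ B) (fderiv ℝ (fderiv ℝ B) x) x :=
    (hB2.differentiable (by simp) x).hasFDerivAt
  have sym := second_derivative_symmetric dB ddB
  have key : ∀ a b p q, fderiv ℝ (fderiv ℝ B) x a b p q =
      fderiv ℝ B x a (C.Γ x b p) q + B x (fderiv ℝ C.Γ x a b p) q
      + fderiv ℝ B x a p (C.Γ x b q) + B x p (fderiv ℝ C.Γ x a b q) := by
    intro a b p q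
    have h1 := ((ddB.clm_apply (hasFDerivAt_const b x)).clm_apply
      (hasFDerivAt_const p x)).clm_apply (hasFDerivAt_const q x)
    have g1 := fun r => (dΓ.clm_apply (hasFDerivAt_const b x)).clm_apply (hasFDerivAt_const r x)
    have h2 := (((dB x).clm_apply (g1 p)).clm_apply (hasFDerivAt_const q x)).add
      (((dB x).clm_apply (hasFDerivAt_const p x)).clm_apply (g1 q))
    have h3 : (fun y => fderiv ℝ B y b p q) =
      (fun y => B y (C.Γ y b p) q) + (fun y => B y p (C.Γ y b q)) := by
      funext y; simp [hB y b p q]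
    rw [h3] at h1
    have h4 := congrArg (fun L => L a) (h1.unique h2)
    simp at h4
    linarith
  have k1 := key u v w z
  have k2 := key v u w z
  rw [sym u v] at k1
  simp only [hB] at k1 k2
  simp only [curvOp, sub_apply, add_apply,
    ContinuousLinearMap.comp_apply, map_add, map_sub]
  linarith

/-- Derivative of the curvature operator. -/
theorem curv_deriv {E : Type*} [NormedAddCommGroup E] [NormedSpace ℝ E]
    {Ω : SympForm E} (C : SympConnection Ω) (x u v : E) :
    ∃ L : E →L[ℝ] E →L[ℝ] E, HasFDerivAt (fun y => curvOp C y u v) L x ∧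
      ∀ w, L w = fderiv ℝ (fderiv ℝ C.Γ) x w u v - fderiv ℝ (fderiv ℝ C.Γ) x w v u
        + (fderiv ℝ C.Γ x w u * C.Γ x v + C.Γ x u * fderiv ℝ C.Γ x w v)
        - (fderiv ℝ C.Γ x w v * C.Γ x u + C.Γ x v * fderiv ℝ C.Γ x w u) := by
  have dΓ : HasFDerivAt C.Γ (fderiv ℝ C.Γ x) x :=
    (C.smooth.differentiable (by simp) x).hasFDerivAt
  have hΓ2 : ContDiff ℝ (1 : ℕ∞) (fderiv ℝ C.Γ) := C.smooth.fderiv_right (by norm_cast)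
  have ddΓ : HasFDerivAt (fderiv ℝ C.Γ) (fderiv ℝ (fderiv ℝ C.Γ) x) x :=
    (hΓ2.differentiable (by simp) x).hasFDerivAt
  have d1 := fun a => dΓ.clm_apply (hasFDerivAt_const a x)
  have d2 := fun a b => (ddΓ.clm_apply (hasFDerivAt_const a x)).clm_apply (hasFDerivAt_const b x)
  refine ⟨_, (((d2 u v).sub (d2 v u)).add ((d1 u).clm_comp (d1 v))).sub
    ((d1 v).clm_comp (d1 u)), ?_⟩
  intro w
  ext q
  simp
  abel

theorem second_bianchi {E : Type*} [NormedAddCommGroup E] [NormedSpace ℝ E]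
    {Ω : SympForm E} (C : SympConnection Ω) (x : E) (L : E → E → E →L[ℝ] E →L[ℝ] E)
    (hL : ∀ u v w, L u v w =
      fderiv ℝ (fderiv ℝ C.Γ) x w u v - fderiv ℝ (fderiv ℝ C.Γ) x w v u
        + (fderiv ℝ C.Γ x w u * C.Γ x v + C.Γ x u * fderiv ℝ C.Γ x w v)
        - (fderiv ℝ C.Γ x w v * C.Γ x u + C.Γ x v * fderiv ℝ C.Γ x w u)) (u v w : E) :
    (L u v w + C.Γ x w * curvOp C x u v - curvOp C x u v * C.Γ x w)
    + (L v w u + C.Γ x u * curvOp C x v w - curvOp C x v w * C.Γ x u)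
    + (L w u v + C.Γ x v * curvOp C x w u - curvOp C x w u * C.Γ x v) = 0 := by
  have dΓ : ∀ y, HasFDerivAt C.Γ (fderiv ℝ C.Γ y) y := fun y =>
    (C.smooth.differentiable (by simp) y).hasFDerivAt
  have hΓ2 : ContDiff ℝ (1 : ℕ∞) (fderiv ℝ C.Γ) := C.smooth.fderiv_right (by norm_cast)
  have ddΓ : HasFDerivAt (fderiv ℝ C.Γ) (fderiv ℝ (fderiv ℝ C.Γ) x) x :=
    (hΓ2.differentiable (by simp) x).hasFDerivAt
  have sym := second_derivative_symmetric dΓ ddΓ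
  have hc : ∀ a b, curvOp C x a b = fderiv ℝ C.Γ x a b - fderiv ℝ C.Γ x b a
    + C.Γ x a * C.Γ x b - C.Γ x b * C.Γ x a := fun a b => rfl
  simp only [hL, hc]
  rw [sym w u, sym w v, sym u v]
  noncomm_ring

/-- Trace as a continuous linear map. -/
noncomputable def trL (E : Type*) [NormedAddCommGroup E] [NormedSpace ℝ E]
    [FiniteDimensional ℝ E] : (E →L[ℝ] E) →L[ℝ] ℝ :=
  LinearMap.toContinuousLinearMap
    ((LinearMap.trace ℝ E) ∘ₗ (ContinuousLinearMap.coeLM ℝ : (E →L[ℝ] E) →ₗ[ℝ] (E →ₗ[ℝ] E)))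

theorem trL_apply {E : Type*} [NormedAddCommGroup E] [NormedSpace ℝ E]
    [FiniteDimensional ℝ E] (A : E →L[ℝ] E) :
    trL E A = LinearMap.trace ℝ E (A : E →ₗ[ℝ] E) := rfl

theorem trL_comm {E : Type*} [NormedAddCommGroup E] [NormedSpace ℝ E]
    [FiniteDimensional ℝ E] (A B : E →L[ℝ] E) : trL E (A * B) = trL E (B * A) := by
  rw [trL_apply, trL_apply]
  exact LinearMap.trace_mul_comm ℝ (A : E →ₗ[ℝ] E) (B : E →ₗ[ℝ] E)

/-- The Ricci form `tr (J R(u,v))` is closed when `J` is parallel. -/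
theorem ricci_form_closed {E : Type*} [NormedAddCommGroup E] [NormedSpace ℝ E]
    [FiniteDimensional ℝ E] {Ω : SympForm E} (C : SympConnection Ω) (J : E → E →L[ℝ] E)
    (hJ : ∀ x w, HasFDerivAt J (fderiv ℝ J x) x ∧
      fderiv ℝ J x w = J x * C.Γ x w - C.Γ x w * J x) (x : E) :
    ∃ Φ : E → E → E →L[ℝ] ℝ,
      (∀ u v, HasFDerivAt (fun y => trL E (J y * curvOp C y u v)) (Φ u v) x) ∧
      ∀ u v w, Φ u v w + Φ v w u + Φ w u v = 0 := by
  choose L hL1 hL2 using fun u v => curv_deriv C x u v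
  refine ⟨fun u v => _, fun u v => (trL E).hasFDerivAt.comp x
    ((hJ x 0).1.clm_comp (hL1 u v)), ?_⟩
  intro u v w
  have e : ∀ a b c, ((trL E) ∘SL ((ContinuousLinearMap.compL ℝ E E E) (J x) ∘SL L a b
      + (ContinuousLinearMap.compL ℝ E E E).flip (curvOp C x a b) ∘SL fderiv ℝ J x)) c =
      trL E (J x * (L a b c + C.Γ x c * curvOp C x a b - curvOp C x a b * C.Γ x c)) := by
    intro a b c
    have e1 : ((trL E) ∘SL ((ContinuousLinearMap.compL ℝ E E E) (J x) ∘SL L a b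
      + (ContinuousLinearMap.compL ℝ E E E).flip (curvOp C x a b) ∘SL fderiv ℝ J x)) c =
      trL E (J x * L a b c + fderiv ℝ J x c * curvOp C x a b) := rfl
    rw [e1, (hJ x c).2]
    have e2 := trL_comm (C.Γ x c) (J x * curvOp C x a b)
    simp only [mul_add, mul_sub, sub_mul, map_add, map_sub, mul_assoc] at e2 ⊢
    rw [e2]; ring
  rw [e, e, e, ← map_add, ← map_add, ← mul_add, ← mul_add, second_bianchi C x L hL2]
  simp

theorem curv_bianchi {E : Type*} [NormedAddCommGroup E] [NormedSpace ℝ E]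
    {Ω : SympForm E} (C : SympConnection Ω) (x u v w : E) :
    curvOp C x u v w + curvOp C x v w u + curvOp C x w u v = 0 := by
  have dΓ : HasFDerivAt C.Γ (fderiv ℝ C.Γ x) x :=
    (C.smooth.differentiable (by simp) x).hasFDerivAt
  have hs : ∀ a p q, fderiv ℝ C.Γ x a p q = fderiv ℝ C.Γ x a q p := by
    intro a p q
    have h := fun r s => (dΓ.clm_apply (hasFDerivAt_const r x)).clm_apply (hasFDerivAt_const s x)
    have h1 := h p q
    have h2 : (fun y => C.Γ y p q) = (fun y => C.Γ y q p) := by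
      funext y; exact C.symm y p q
    rw [h2] at h1
    have h4 := congrArg (fun L => L a) (h1.unique (h q p))
    simpa using h4
  simp only [curvOp, sub_apply, add_apply, ContinuousLinearMap.comp_apply]
  rw [hs u v w, hs v w u, hs w u v, C.symm x v w, C.symm x w u, C.symm x u v]
  abel

theorem exists_kalg {E : Type*} [NormedAddCommGroup E] [NormedSpace ℝ E]
    {Ω : SympForm E} (C : SympConnection Ω)
    (ε : ℝ) (hε : ε = 1 ∨ ε = -1)
    (g : E → E →L[ℝ] E →L[ℝ] ℝ) (J : E → E →L[ℝ] E)
    (hgsmooth : ContDiff ℝ (⊤ : ℕ∞) g)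
    (hgsymm : ∀ x u v, g x u v = g x v u)
    (hgnondeg : ∀ x u, (∀ v, g x u v = 0) → u = 0)
    (hJsq : ∀ x u, J x (J x u) = ε • u)
    (hcompat : ∀ x u v, g x (J x u) v = Ω.ω x u v)
    (hg : ∀ x u v w, fderiv ℝ g x u v w = g x (C.Γ x u v) w + g x v (C.Γ x u w)) (x : E) :
    ∃ K : KAlg E, (∀ u v, K.g u v = g x u v) ∧ (∀ u, K.J u = J x u) ∧
      (∀ u v w, K.R u v w = curvOp C x u v w) ∧ K.ε = ε ∧
      ∀ u v, K.ric u v = ricci C x u v := by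
  refine ⟨{ g := LinearMap.mk₂ ℝ (fun u v => g x u v) (by simp) (by simp) (by simp) (by simp)
            J := (J x : E →ₗ[ℝ] E)
            R := LinearMap.mk₂ ℝ (fun u v => (curvOp C x u v : E →ₗ[ℝ] E))
              (by intro a b c; ext w; simp [curvOp]; abel)
              (by intro a b c; ext w; simp [curvOp, smul_sub, smul_add])
              (by intro a b c; ext w; simp [curvOp]; abel)
              (by intro a b c; ext w; simp [curvOp, smul_sub, smul_add])
            ε := ε
            hε := by rcases hε with h | h <;> simp [h]
            gsymm := hgsymm x
            gnd := hgnondeg x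
            JJ := hJsq x
            Jskew := ?_
            Rskew := ?_
            Rbi := curv_bianchi C x
            Rg := curv_skew C g hgsmooth hg x
            RΩ := ?_ }, fun u v => rfl, fun u => rfl, fun u v w => rfl, rfl, ?_⟩
  · intro u v
    change g x (J x u) v = - g x u (J x v)
    rw [hcompat, Ω.skew, ← hcompat, hgsymm]
  · intro u v w
    change curvOp C x u v w = - curvOp C x v u w
    simp [curvOp]
    abel
  · intro u v w z
    change g x (J x (curvOp C x u v w)) z + g x (J x w) (curvOp C x u v z) = 0
    rw [hcompat, hcompat]
    exact curv_skew C Ω.ω Ω.smooth C.parallel x u v w z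
  · intro u v
    rw [KAlg.ric_apply, ricci]
    congr 1

theorem J_parallel {E : Type*} [NormedAddCommGroup E] [NormedSpace ℝ E]
    {Ω : SympForm E} (C : SympConnection Ω)
    (g : E → E →L[ℝ] E →L[ℝ] ℝ) (J : E → E →L[ℝ] E)
    (hgsmooth : ContDiff ℝ (⊤ : ℕ∞) g) (hJsmooth : ContDiff ℝ (⊤ : ℕ∞) J)
    (hgnondeg : ∀ x u, (∀ v, g x u v = 0) → u = 0)
    (hcompat : ∀ x u v, g x (J x u) v = Ω.ω x u v)
    (hg : ∀ x u v w, fderiv ℝ g x u v w = g x (C.Γ x u v) w + g x v (C.Γ x u w)) (x w : E) :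
    HasFDerivAt J (fderiv ℝ J x) x ∧ fderiv ℝ J x w = J x * C.Γ x w - C.Γ x w * J x := by
  have dJ : HasFDerivAt J (fderiv ℝ J x) x :=
    (hJsmooth.differentiable (by simp) x).hasFDerivAt
  have dg : HasFDerivAt g (fderiv ℝ g x) x :=
    (hgsmooth.differentiable (by simp) x).hasFDerivAt
  have dΩ : HasFDerivAt Ω.ω (fderiv ℝ Ω.ω x) x :=
    (Ω.smooth.differentiable (by simp) x).hasFDerivAt
  refine ⟨dJ, ?_⟩
  ext u
  rw [← sub_eq_zero]
  apply hgnondeg x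
  intro v
  have h1 := (dg.clm_apply (dJ.clm_apply (hasFDerivAt_const u x))).clm_apply
    (hasFDerivAt_const v x)
  have h2 := (dΩ.clm_apply (hasFDerivAt_const u x)).clm_apply (hasFDerivAt_const v x)
  have h3 : (fun y => g y (J y u) v) = (fun y => Ω.ω y u v) := by
    funext y; exact hcompat y u v
  rw [h3] at h1
  have h4 := congrArg (fun L => L w) (h1.unique h2)
  simp [hg, C.parallel, hcompat] at h4
  simp [hcompat]
  linarith

/-- Schur-type lemma. -/
theorem schur {E : Type*} [NormedAddCommGroup E] [NormedSpace ℝ E]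
    [FiniteDimensional ℝ E]
    (n : ℕ) (hn : 2 ≤ n) (hdim : Module.finrank ℝ E = 2 * n)
    {Ω : SympForm E} (C : SympConnection Ω) (J : E → E →L[ℝ] E)
    (hJ : ∀ x w, HasFDerivAt J (fderiv ℝ J x) x ∧
      fderiv ℝ J x w = J x * C.Γ x w - C.Γ x w * J x) (f : E → ℝ)
    (hf : ∀ x u v, trL E (J x * curvOp C x u v) = f x * Ω.ω x u v) (x y : E) : f x = f y := by
  have hnt : Nontrivial E := Module.nontrivial_of_finrank_pos (R := ℝ) (by omega)
  have dΩ : ∀ x, HasFDerivAt Ω.ω (fderiv ℝ Ω.ω x) x := fun x =>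
    (Ω.smooth.differentiable (by simp) x).hasFDerivAt
  have dΩ2 := fun x u v =>
    ((dΩ x).clm_apply (hasFDerivAt_const u x)).clm_apply (hasFDerivAt_const v x)
  have hdiff : Differentiable ℝ f := by
    intro x
    obtain ⟨u, hu⟩ := exists_ne (0 : E)
    obtain ⟨v, hv⟩ : ∃ v, Ω.ω x u v ≠ 0 := by
      by_contra! h
      exact hu (Ω.nondeg x u h)
    obtain ⟨Φ, hΦ, -⟩ := ricci_form_closed C J hJ x
    have hq : DifferentiableAt ℝ
        (fun y => trL E (J y * curvOp C y u v) * (Ω.ω y u v)⁻¹) x := by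
      have q1 := (hΦ u v).differentiableAt
      have q2 := ((differentiableAt_inv hv).comp x (dΩ2 x u v).differentiableAt)
      exact q1.mul q2
    refine hq.congr_of_eventuallyEq ?_
    have hev := (dΩ2 x u v).continuousAt.eventually_ne hv
    filter_upwards [hev] with y hy
    rw [hf, mul_inv_cancel_right₀ hy]
  refine is_const_of_fderiv_eq_zero hdiff ?_ x y
  intro x
  obtain ⟨Φ, hΦ, hc⟩ := ricci_form_closed C J hJ x
  set α := fderiv ℝ f x with hα
  have hΦe : ∀ u v w, Φ u v w = α w * Ω.ω x u v + f x * fderiv ℝ Ω.ω x w u v := by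
    intro u v w
    have h1 := (hdiff x).hasFDerivAt.mul (dΩ2 x u v)
    have h2 := hΦ u v
    simp only [hf] at h2
    have h4 := congrArg (fun L => L w) (h2.unique h1)
    simp at h4
    rw [h4]; ring
  have hcyc : ∀ u v w, α w * Ω.ω x u v + α u * Ω.ω x v w + α v * Ω.ω x w u = 0 := by
    intro u v w
    have h := hc u v w
    rw [hΦe, hΦe, hΦe, C.parallel, C.parallel, C.parallel, C.symm x w u, C.symm x v u,
      C.symm x w v] at h
    have s1 := Ω.skew x (C.Γ x u w) v
    have s2 := Ω.skew x (C.Γ x v w) u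
    have s3 := Ω.skew x (C.Γ x u v) w
    linear_combination h - f x * (s1 + s2 + s3)
  obtain ⟨a, ha⟩ : ∃ a, ∀ v, Ω.ω x a v = α v := by
    let W : E →ₗ[ℝ] Module.Dual ℝ E :=
      LinearMap.mk₂ ℝ (fun u v => Ω.ω x u v) (by simp) (by simp) (by simp) (by simp)
    have hinj : Function.Injective W := by
      rw [injective_iff_map_eq_zero]
      intro u hu
      apply Ω.nondeg x u
      intro v
      exact congrArg (fun L => L v) hu
    have hsurj : Function.Surjective W :=
      (LinearMap.injective_iff_surjective_of_finrank_eq_finrank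
        (Subspace.dual_finrank_eq).symm).1 hinj
    obtain ⟨a, ha⟩ := hsurj (α : E →ₗ[ℝ] ℝ)
    exact ⟨a, fun v => congrArg (fun L => L v) ha⟩
  ext w
  have hz : α w • LinearMap.id - (α : E →ₗ[ℝ] ℝ).smulRight w
      + ((Ω.ω x w : E →L[ℝ] ℝ) : E →ₗ[ℝ] ℝ).smulRight a = 0 := by
    ext u
    apply Ω.nondeg x
    intro v
    have := hcyc u v w
    have s1 := Ω.skew x v w
    simp [ha]
    rw [s1] at this
    linarith
  have ht := congrArg (LinearMap.trace ℝ E) hz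
  rw [map_add, map_sub, map_smul, LinearMap.trace_smulRight, LinearMap.trace_smulRight,
    LinearMap.trace_id, hdim, map_zero] at ht
  simp only [smul_eq_mul, ContinuousLinearMap.coe_coe] at ht
  rw [Ω.skew, ha] at ht
  push_cast at ht
  have hn' : (2 : ℝ) ≤ n := by exact_mod_cast hn
  have h5 : α w * (2 * (n - 1)) = 0 := by linarith
  rcases mul_eq_zero.1 h5 with h | h
  · simpa using h
  · exfalso; linarith

end AnalysisPart

/-- For the Levi-Civita connection `C` of a pseudo-Kähler (`ε = -1`) or
para-Kähler (`ε = 1`) structure `(g, J, Ω)` on a symplectic manifold of dimension `2n > 2`: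
(1) the symplectic Weyl tensor is trace-free with respect to `g` iff `g` is Einstein;
(2) the symplectic Weyl tensor vanishes iff `(g, J, Ω)` has constant (para-)holomorphic
sectional curvature.  The `g`-trace `g^{ab}W_{iab}{}^{p}g_{pj}` is encoded through any linear
packagings `T` (of the `(1,3)`-Weyl tensor, via `Ω`) and `D` (via `g`), which exist and are
unique by nondegeneracy. -/
theorem statement_0 {E : Type*} [NormedAddCommGroup E] [NormedSpace ℝ E]
    [FiniteDimensional ℝ E]
    (n : ℕ) (hn : 2 ≤ n) (hdim : Module.finrank ℝ E = 2 * n)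
    (Ω : SympForm E) (C : SympConnection Ω)
    (ε : ℝ) (hε : ε = 1 ∨ ε = -1)
    (g : E → E →L[ℝ] E →L[ℝ] ℝ) (J : E → E →L[ℝ] E)
    (hgsmooth : ContDiff ℝ (⊤ : ℕ∞) g) (hJsmooth : ContDiff ℝ (⊤ : ℕ∞) J)
    (hgsymm : ∀ x u v, g x u v = g x v u)
    (hgnondeg : ∀ x u, (∀ v, g x u v = 0) → u = 0)
    (hJsq : ∀ x u, J x (J x u) = ε • u)
    (hJint : ∀ x u v, nijTensor (fun y w => J y w) x u v = 0)
    (hcompat : ∀ x u v, g x (J x u) v = Ω.ω x u v)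
    (hLC : IsLeviCivita C (fun y a b => g y a b)) :
    ((∀ x u v, ∀ T : E → E → E,
        (∀ a b z, Ω.ω x (T a b) z = weyl n C x u a b z) →
        ∀ D : E →ₗ[ℝ] E, (∀ a b, g x (D a) b = g x (T a b) v) →
        LinearMap.trace ℝ E D = 0)
      ↔ ∃ κ : ℝ, ∀ x u v, ricci C x u v = κ * g x u v)
    ∧ (WeylFlat n C ↔ ∃ c : ℝ, ConstHoloSec C (fun y a b => g y a b) c) := by
  have hg : ∀ x u v w, fderiv ℝ g x u v w = g x (C.Γ x u v) w + g x v (C.Γ x u w) := by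
    intro x u v w
    rw [← hLC x u v w]
    have dg : HasFDerivAt g (fderiv ℝ g x) x :=
      (hgsmooth.differentiable (by simp) x).hasFDerivAt
    have h1 := (dg.clm_apply (hasFDerivAt_const v x)).clm_apply (hasFDerivAt_const w x)
    rw [h1.fderiv]
    simp
  choose K Kg KJ KR Kε Kric using
    exists_kalg C ε hε g J hgsmooth hgsymm hgnondeg hJsq hcompat hg
  have hεε : ε * ε = 1 := by rcases hε with h | h <;> simp [h]
  have hn' : (2 : ℝ) ≤ n := by exact_mod_cast hn
  have hn1 : (n : ℝ) + 1 ≠ 0 := by linarith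
  -- the Weyl tensor in terms of the pointwise data
  have hW : ∀ x u v w z, weyl n C x u v w z =
      (K x).g ((K x).J ((K x).R u v w)) z - 1 / ((n : ℝ) + 1) * (K x).Kt (K x).ric u v w z := by
    intro x u v w z
    simp only [weyl, Rlow, KAlg.Kt, Kg, KJ, KR, Kric, hcompat]
  -- the trace of any packaging
  have hDT : ∀ x u v (T : E → E → E), (∀ a b z, Ω.ω x (T a b) z = weyl n C x u a b z) →
      ∀ a b, g x (T a b) v = - ε * weyl n C x u a b (J x v) := by
    intro x u v T hT a b
    rw [← hT, ← hcompat, ← KJ, ← KJ, ← Kg, ← Kg, (K x).Jskew, (K x).JJ, map_smul, Kε,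
      smul_eq_mul]
    linear_combination (-(K x).g (T a b) v) * hεε
  have hTr : ∀ x u v (D : E →ₗ[ℝ] E),
      (∀ a b, g x (D a) b = - ε * weyl n C x u a b (J x v)) →
      LinearMap.trace ℝ E D = (1 - 1 / ((n : ℝ) + 1)) * ricci C x u v
        - 1 / ((n : ℝ) + 1) / 2 * LinearMap.trace ℝ E (K x).P * g x u v := by
    intro x u v D hD
    rw [← Kric, ← Kg]
    apply (K x).trace_W
    intro a b
    rw [Kg, hD, hW, Kε, KJ x v]
  have h1 : (∀ x u v, ∀ T : E → E → E,
        (∀ a b z, Ω.ω x (T a b) z = weyl n C x u a b z) →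
        ∀ D : E →ₗ[ℝ] E, (∀ a b, g x (D a) b = g x (T a b) v) →
        LinearMap.trace ℝ E D = 0)
      ↔ ∃ κ : ℝ, ∀ x u v, ricci C x u v = κ * g x u v := by
    constructor
    · intro h
      have hloc : ∀ x u v, ricci C x u v =
          (LinearMap.trace ℝ E (K x).P / (2 * n)) * g x u v := by
        intro x u v
        -- existence of the packagings
        obtain ⟨T, hT⟩ : ∃ T : E → E → E, ∀ a b z, Ω.ω x (T a b) z = weyl n C x u a b z := by
          refine ⟨fun a b => (K x).ε • -(K x).J ((K x).G.symm (-
            ((K x).G ((K x).J ((K x).R u a b)) - (1 / ((n : ℝ) + 1)) •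
              ((1/2 : ℝ) • ((K x).g ((K x).J u) b • (K x).ric a
                + (K x).ric b a • (K x).g ((K x).J u)
                - (K x).g ((K x).J a) b • (K x).ric u
                - (K x).ric b u • (K x).g ((K x).J a))
              + (K x).g ((K x).J u) a • (K x).ric b)))), ?_⟩
          intro a b z
          rw [← hcompat, hW, ← KJ, ← Kg]
          simp only [map_smul, map_neg, (K x).JJ, LinearMap.smul_apply, LinearMap.neg_apply]
          rw [← (K x).G_apply, LinearEquiv.apply_symm_apply]
          have r1 := (K x).ric_symm z a
          have r2 := (K x).ric_symm z u
          simp only [KAlg.Kt, LinearMap.sub_apply, LinearMap.add_apply, LinearMap.smul_apply,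
            smul_eq_mul, KAlg.G_apply, r1, r2, neg_neg]
          rw [← mul_assoc, (K x).hε]
          ring
        obtain ⟨D, hD⟩ : ∃ D : E →ₗ[ℝ] E, ∀ a b, g x (D a) b =
            - ε * weyl n C x u a b (J x v) := by
          let z := J x v
          let B : E →ₗ[ℝ] Module.Dual ℝ E := LinearMap.mk₂ ℝ
            (fun a b => - ε * weyl n C x u a b z)
            (by intro a b c; simp only [hW, KAlg.Kt, map_add, LinearMap.add_apply]; ring)
            (by intro a b c; simp only [hW, KAlg.Kt, map_smul, LinearMap.smul_apply,
                  smul_eq_mul]; ring)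
            (by intro a b c; simp only [hW, KAlg.Kt, map_add, LinearMap.add_apply]; ring)
            (by intro a b c; simp only [hW, KAlg.Kt, map_smul, LinearMap.smul_apply,
                  smul_eq_mul]; ring)
          refine ⟨(K x).G.symm.toLinearMap ∘ₗ B, fun a b => ?_⟩
          rw [← Kg, ← (K x).G_apply]
          simp [B, z]
        have h0 := h x u v T hT D (fun a b => by rw [hD, hDT x u v T hT])
        rw [hTr x u v D hD] at h0
        field_simp at h0 ⊢
        linarith
      refine ⟨LinearMap.trace ℝ E (K 0).P / (2 * n), ?_⟩
      intro x u v
      rw [hloc x u v]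
      congr 1
      have hs := schur n hn hdim C J
        (J_parallel C g J hgsmooth hJsmooth hgnondeg hcompat hg)
        (fun y => 2 * (LinearMap.trace ℝ E (K y).P / (2 * n))) ?_ x 0
      · linarith
      · intro y a b
        have e1 : trL E (J y * curvOp C y a b) =
            LinearMap.trace ℝ E ((K y).J ∘ₗ (K y).R a b) := by
          rw [trL_apply]
          congr 1
          ext w
          simp [KJ, KR]
        rw [e1, (K y).trace_JR, Kric, hloc, KJ, ← hcompat, ← Kg, ← Kg, ← KJ, ← KJ, (K y).Jskew]
        ring
    · rintro ⟨κ, hκ⟩ x u v T hT D hD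
      have hP : (K x).P = κ • LinearMap.id := by
        ext a
        apply (K x).ext_g
        intro b
        rw [KAlg.g_P, Kric, hκ]
        simp [Kg]
      rw [hTr x u v D (fun a b => by rw [hD, hDT x u v T hT]), hP, map_smul, LinearMap.trace_id,
        hdim, hκ]
      push_cast
      simp only [smul_eq_mul]
      field_simp
      ring
  refine ⟨h1, ?_, ?_⟩
  · intro hflat
    obtain ⟨κ, hκ⟩ := h1.1 (by
      intro x u v T hT D hD
      have : D = 0 := by
        ext a
        apply hgnondeg x
        intro b
        rw [hD, hDT x u v T hT, hflat]
        simp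
      rw [this, map_zero])
    refine ⟨κ / (2 * (n + 1)), ?_⟩
    intro x u v w z
    have h := hflat x u v w z
    simp only [weyl, hκ] at h
    have h2 := sub_eq_zero.1 h
    rw [h2]
    field_simp
  · rintro ⟨c, hc⟩ x u v w z
    have hr : ∀ u v, ricci C x u v = 2 * c * (n + 1) * g x u v := by
      intro u v
      rw [← Kric, ← Kg]
      apply (K x).ric_const n hdim
      intro u v w z
      have := hc x u v w z
      simp only [Rlow] at this
      simp only [KAlg.Kt, Kg, KJ, KR, hcompat]
      exact this
    have := hc x u v w z
    simp only [weyl, hr, this]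
    field_simp
    ring
end

section
/- Let (M, Ω) be a 2n-dimensional symplectic manifold and let ∇ be a symplectically flat symplectic connection, i.e. its symplectic Weyl tensor vanishes and ∇_{(i}R_{jk)} = 0. Then the following are equivalent: (1) the curvature one-form ρ_i = ∇^p R_{ip} vanishes; (2) the Ricci tensor is parallel; (3) ∇ is locally symmetric (∇R = 0). Moreover, when these hold, the Ricci endomorphism R_i{}^j satisfies R_j{}^p R_p{}^i = −r δ_j{}^i, where 2nr = R_{pq}R^{pq} is constant. -/
variable {E : Type*} [NormedAddCommGroup E] [NormedSpace ℝ E]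

section helpers

/-- Symplectic duality data at a point. -/
structure SDual {E : Type*} [NormedAddCommGroup E] [NormedSpace ℝ E]
    (w : E →L[ℝ] E →L[ℝ] ℝ) (m : ℕ) (b c : Fin m → E) : Prop where
  left : ∀ y : E, ∑ i, w y (c i) • b i = y
  right : ∀ y : E, ∑ i, w (b i) y • c i = y
  tr : ∀ L : E →ₗ[ℝ] E, LinearMap.trace ℝ E L = ∑ i, w (L (b i)) (c i)
  one : ∀ i, w (b i) (c i) = 1
  skew : ∀ u v, w u v = - w v u


theorem flat_equiv [FiniteDimensional ℝ E] (w : E →L[ℝ] E →L[ℝ] ℝ)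
    (hnd : ∀ u, (∀ v, w u v = 0) → u = 0) :
    ∃ e : E ≃L[ℝ] (E →L[ℝ] ℝ), (e : E →L[ℝ] (E →L[ℝ] ℝ)) = w := by
  have hinj : Function.Injective (w : E →ₗ[ℝ] (E →L[ℝ] ℝ)) := by
    rw [injective_iff_map_eq_zero]
    intro u hu
    apply hnd u
    intro v
    have : w u = 0 := hu
    rw [this]; rfl
  have hfr : Module.finrank ℝ E = Module.finrank ℝ (E →L[ℝ] ℝ) := by
    rw [← (LinearMap.toContinuousLinearMap (𝕜 := ℝ) (E := E) (F' := ℝ)).finrank_eq]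
    exact (Subspace.dual_finrank_eq (K := ℝ) (V := E)).symm
  refine ⟨(LinearEquiv.ofInjectiveOfFinrankEq (w : E →ₗ[ℝ] (E →L[ℝ] ℝ)) hinj hfr).toContinuousLinearEquiv, ?_⟩
  ext u v
  rfl

theorem exists_sdual [FiniteDimensional ℝ E] (m : ℕ) (hm : Module.finrank ℝ E = m)
    (w : E →L[ℝ] E →L[ℝ] ℝ) (hsk : ∀ u v, w u v = - w v u)
    (hnd : ∀ u, (∀ v, w u v = 0) → u = 0) : ∃ b c : Fin m → E, SDual w m b c := by
  obtain ⟨e, he⟩ := flat_equiv w hnd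
  have he' : ∀ u v, e u v = w u v := fun u v => by rw [← he]; rfl
  let b := Module.finBasisOfFinrankEq ℝ E hm
  let c : Fin m → E := fun i => - e.symm (LinearMap.toContinuousLinearMap (b.coord i))
  have hc : ∀ y i, w y (c i) = b.repr y i := by
    intro y i
    rw [hsk]
    simp only [c, map_neg, neg_apply, neg_neg]
    rw [← he']
    simp
  have hleft : ∀ y : E, ∑ i, w y (c i) • b i = y := by
    intro y; simp only [hc]; exact b.sum_repr y
  refine ⟨b, c, hleft, ?_, ?_, ?_, hsk⟩
  · intro y
    rw [← sub_eq_zero]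
    apply hnd
    intro z
    rw [hsk, map_sub, map_sum]
    simp only [map_smul, smul_eq_mul]
    conv_lhs => rw [← hleft z]
    simp only [map_sum, map_smul, sum_apply, smul_apply, smul_eq_mul]
    simp only [hc]
    simp [mul_comm]
    simp [Finsupp.single_apply]
  · intro L
    rw [LinearMap.trace_eq_matrix_trace ℝ b, Matrix.trace]
    simp [hc, LinearMap.toMatrix_apply]
  · intro i; rw [hc]; simp

namespace SDual
variable {w : E →L[ℝ] E →L[ℝ] ℝ} {m : ℕ} {b c : Fin m → E}

theorem c1 (h : SDual w m b c) (θ : E → ℝ) (hθ : IsLinearMap ℝ θ) (y : E) :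
    ∑ i, w (b i) y * θ (c i) = θ y := by
  conv_rhs => rw [← h.right y]
  change _ = hθ.mk' θ _
  simp

theorem c2 (h : SDual w m b c) (θ : E → ℝ) (hθ : IsLinearMap ℝ θ) (y : E) :
    ∑ i, w y (c i) * θ (b i) = θ y := by
  conv_rhs => rw [← h.left y]
  change _ = hθ.mk' θ _
  simp

theorem c2' (h : SDual w m b c) (θ : E → ℝ) (hθ : IsLinearMap ℝ θ) (y : E) :
    ∑ i, w (c i) y * θ (b i) = - θ y := by
  rw [← h.c2 θ hθ y, ← Finset.sum_neg_distrib]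
  exact Finset.sum_congr rfl fun i _ => by rw [h.skew]; ring

theorem c1' (h : SDual w m b c) (θ : E → ℝ) (hθ : IsLinearMap ℝ θ) (y : E) :
    ∑ i, w y (b i) * θ (c i) = - θ y := by
  rw [← h.c1 θ hθ y, ← Finset.sum_neg_distrib]
  exact Finset.sum_congr rfl fun i _ => by rw [h.skew]; ring

theorem c0 (h : SDual w m b c) : ∑ i, w (b i) (c i) = m := by
  simp [h.one]

theorem swap (h : SDual w m b c) (B : E → E → ℝ) (h1 : ∀ v, IsLinearMap ℝ (fun u => B u v))
    (h2 : ∀ u, IsLinearMap ℝ (B u)) : ∑ i, B (c i) (b i) = - ∑ i, B (b i) (c i) := by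
  have e1 : ∀ i, B (c i) (b i) = ∑ j, w (c i) (c j) * B (b j) (b i) := fun i =>
    (h.c2 (fun u => B u (b i)) (h1 _) (c i)).symm
  have e2 : ∀ i, B (b i) (c i) = ∑ j, w (c i) (c j) * B (b i) (b j) := fun i =>
    (h.c2 (fun u => B (b i) u) (h2 _) (c i)).symm
  simp only [e1, e2]
  rw [Finset.sum_comm, ← Finset.sum_neg_distrib]
  refine Finset.sum_congr rfl fun i _ => ?_
  rw [← Finset.sum_neg_distrib]
  exact Finset.sum_congr rfl fun j _ => by rw [h.skew]; ring

theorem tr_symm (h : SDual w m b c) (B : E → E → ℝ) (h1 : ∀ v, IsLinearMap ℝ (fun u => B u v))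
    (h2 : ∀ u, IsLinearMap ℝ (B u)) (hs : ∀ u v, B u v = B v u) : ∑ i, B (b i) (c i) = 0 := by
  have := h.swap B h1 h2
  simp only [hs (c _) (b _)] at this
  linarith

/-- The curvature-type formula built from a bilinear form. -/
noncomputable def K (w : E →L[ℝ] E →L[ℝ] ℝ) (B : E → E → ℝ) (u v x z : E) : ℝ :=
  (w u x * B z v + w u z * B x v) / 2 - (w v x * B z u + w v z * B x u) / 2 + w u v * B x z

theorem K_trace (h : SDual w m b c) (B : E → E → ℝ) (h1 : ∀ v, IsLinearMap ℝ (fun u => B u v))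
    (h2 : ∀ u, IsLinearMap ℝ (B u)) (v x : E) :
    ∑ i, K w B (b i) v x (c i) =
      (m / 2 + 1) * B x v + w v x * (∑ i, B (b i) (c i)) / 2 := by
  have t1 := h.c1 (fun u => B u v) (h1 v) x
  have t2 := h.c0
  have t3 := h.swap B h1 h2
  have t4 := h.c2 (fun u => B x u) (h2 x) v
  have t5 := h.c1 (fun u => B x u) (h2 x) v
  have : ∑ i, K w B (b i) v x (c i) =
     (∑ i, w (b i) x * B (c i) v) / 2 + (∑ i, w (b i) (c i)) * B x v / 2
     - w v x * (∑ i, B (c i) (b i)) / 2 - (∑ i, w v (c i) * B x (b i)) / 2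
     + ∑ i, w (b i) v * B x (c i) := by
    simp only [Finset.sum_mul, Finset.mul_sum, Finset.sum_div, ← Finset.sum_add_distrib,
      ← Finset.sum_sub_distrib]
    exact Finset.sum_congr rfl fun i _ => by unfold K; ring
  rw [this]
  rw [t1, t2, t3, t4, t5]; ring

/-- Symmetry of the Ricci form. -/
theorem symm_of_trace (h : SDual w m b c) (B : E → E → ℝ)
    (h1 : ∀ v, IsLinearMap ℝ (fun u => B u v))
    (h2 : ∀ u, IsLinearMap ℝ (B u))
    (ht : ∀ v x, (m / 2 + 1) * B v x = ∑ i, K w B (b i) v x (c i)) (u v : E) : B u v = B v u := by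
  simp only [h.K_trace B h1 h2] at ht
  have hm : (0:ℝ) < m / 2 + 1 := by positivity
  have e : ∑ i, ((m / 2 + 1 : ℝ) * B (b i) (c i)) =
     ∑ i, ((m / 2 + 1 : ℝ) * B (c i) (b i) + w (b i) (c i) * ((∑ i, B (b i) (c i)) / 2)) :=
    Finset.sum_congr rfl fun i _ => by rw [ht (b i) (c i)]; ring
  rw [Finset.sum_add_distrib, ← Finset.mul_sum, ← Finset.mul_sum, ← Finset.sum_mul, h.c0,
    h.swap B h1 h2] at e
  have k0 : ∑ i, B (b i) (c i) = 0 := by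
    have : (m / 2 + 2 : ℝ) * ∑ i, B (b i) (c i) = 0 := by linarith
    rcases mul_eq_zero.1 this with h | h
    · exfalso; linarith
    · exact h
  have := ht u v
  rw [k0] at this
  simp at this
  rcases this with h | h
  · exact h
  · exfalso; linarith

theorem eq_zero_of_K (h : SDual w m b c) (B : E → E → ℝ)
    (h1 : ∀ v, IsLinearMap ℝ (fun u => B u v))
    (h2 : ∀ u, IsLinearMap ℝ (B u)) (hs : ∀ u v, B u v = B v u)
    (hK : ∀ u v x z, K w B u v x z = 0) (u v : E) : B u v = 0 := by
  have := h.K_trace B h1 h2 v u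
  rw [h.tr_symm B h1 h2 hs] at this
  simp only [hK] at this
  have hm : (0:ℝ) < m / 2 + 1 := by positivity
  simp at this
  rcases this with h | h
  · exfalso; linarith
  · exact h

theorem T_formula (h : SDual w m b c) (T : E → E → E → ℝ)
    (h1 : ∀ u v, IsLinearMap ℝ (fun a => T a u v))
    (h2 : ∀ a v, IsLinearMap ℝ (fun u => T a u v))
    (h3 : ∀ a u, IsLinearMap ℝ (fun v => T a u v))
    (hs : ∀ a u v, T a u v = T a v u)
    (hp : ∀ u v x, T u v x + T v x u + T x u v = 0)
    (hB : ∀ a u v x z, K w (T a) u v x z + K w (T u) v a x z + K w (T v) a u x z = 0)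
    (hρ : ∀ u, ∑ i, T (b i) u (c i) = 0) (a x z : E) : T a x z = 0 := by
  have hρ' : ∀ u, ∑ i, T (c i) u (b i) = 0 := fun u => by
    rw [h.swap (fun a v => T a u v) (fun v => h1 u v) (fun a => h3 a u), hρ, neg_zero]
  have key : ∀ x z : E, ∑ i, (w (b i) x * (T a z (c i) - T (c i) z a)
      + w (c i) x * (T (b i) z a - T a z (b i)) + w a x * (T (c i) z (b i) - T (b i) z (c i)))
      = 2 * (T a z x - T x z a) := fun x z => by
    have : ∀ i, w (b i) x * (T a z (c i) - T (c i) z a)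
      + w (c i) x * (T (b i) z a - T a z (b i)) + w a x * (T (c i) z (b i) - T (b i) z (c i)) = 
      w (b i) x * (fun v => T a z v) (c i) - w (b i) x * (fun v => T v z a) (c i) 
      + w (c i) x * (fun v => T v z a) (b i) - w (c i) x * (fun v => T a z v) (b i) 
      + w a x * T (c i) z (b i) - w a x * T (b i) z (c i) := fun i => by ring
    simp only [this, Finset.sum_add_distrib, Finset.sum_sub_distrib, ← Finset.mul_sum]
    rw [hρ, hρ', h.c1 _ (h3 a z), h.c1 _ (h1 z a), h.c2' _ (h3 a z), h.c2' _ (h1 z a)]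
    ring
  have k3 : ∑ i, (w (b i) (c i) * T a x z + w (c i) a * (fun v => T v x z) (b i)
      + w a (b i) * (fun v => T v x z) (c i)) = (m - 2) * T a x z := by
    simp only [Finset.sum_add_distrib, ← Finset.sum_mul]
    rw [h.c0, h.c2' _ (h1 x z), h.c1' _ (h1 x z)]; ring
  have tot : ∑ i, (K w (T a) (b i) (c i) x z + K w (T (b i)) (c i) a x z
     + K w (T (c i)) a (b i) x z) = 0 := by simp [hB]
  have e : ∑ i, (K w (T a) (b i) (c i) x z + K w (T (b i)) (c i) a x z
     + K w (T (c i)) a (b i) x z) = (2 * (T a z x - T x z a)) / 2 + (2 * (T a x z - T z x a)) / 2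
      + (m - 2) * T a x z := by
    rw [← key x z, ← key z x, ← k3, Finset.sum_div, Finset.sum_div, ← Finset.sum_add_distrib,
      ← Finset.sum_add_distrib]
    exact Finset.sum_congr rfl fun i _ => by unfold K; ring
  rw [tot] at e
  have p := hp a x z
  rw [hs a z x, hs z x a] at e
  rw [hs z a x] at p
  have hm : (0:ℝ) ≤ m := by positivity
  have e' : (m + 1 : ℝ) * T a x z = 0 := by
    rw [hs z a x] at e
    linarith
  rcases mul_eq_zero.1 e' with h | h
  · exfalso; linarith
  · exact h

theorem A_sq (h : SDual w m b c) (A : E →L[ℝ] E)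
    (hs : ∀ u v, w (A u) v = w (A v) u)
    (hc : ∀ u v x z, K w (fun u v => w (A u) v) u v x (A z) +
       K w (fun u v => w (A u) v) u v z (A x) = 0) (v z : E) :
    (m : ℝ) * w (A (A v)) z = (∑ i, w (A (A (b i))) (c i)) * w v z := by
  have hs' : ∀ u v, w u (A v) = - w (A u) v := fun u v => by rw [h.skew, hs]
  have hl : ∀ u, IsLinearMap ℝ (fun v => w (A (A u)) v) := fun u =>
    ⟨fun x y => by simp, fun r x => by simp⟩
  have hl' : ∀ v, IsLinearMap ℝ (fun u => w (A (A u)) v) := fun u =>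
    ⟨fun x y => by simp, fun r x => by simp⟩
  have e : ∀ u v x z, w u x * w (A (A v)) z - w v x * w (A (A u)) z + w u z * w (A (A v)) x
     - w v z * w (A (A u)) x = 0 := fun u v x z => by
    have := hc u v x z
    unfold K at this
    simp only at this
    have s1 : ∀ p q, w (A (A p)) q = - w (A (A q)) p := fun p q => by
      rw [hs (A p) q, h.skew, hs (A q) p]
    simp only [hs'] at this
    rw [s1 z v, s1 z u, s1 x v, s1 x u, s1 x z, hs u z, hs v z, hs u x, hs v x] at this
    linarith
  have t : ∑ i, (w (b i) (c i) * w (A (A v)) z - w v (c i) * (fun u => w (A (A u)) z) (b i) 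
     + w (b i) z * (fun x => w (A (A v)) x) (c i) - w v z * w (A (A (b i))) (c i)) = 0 := by
    simp [e]
  simp only [Finset.sum_add_distrib, Finset.sum_sub_distrib, ← Finset.sum_mul, ← Finset.mul_sum] at t
  rw [h.c0, h.c2 _ (hl' z), h.c1 _ (hl v)] at t
  linarith

end SDual
end helpers
section geometry
open ContDiff
set_option maxSynthPendingDepth 10
set_option synthInstance.maxHeartbeats 400000
set_option maxHeartbeats 1000000

/-- The operator whose trace is the Ricci tensor. -/
noncomputable def ricOp {Ω : SympForm E} (C : SympConnection Ω) (x u v : E) : E →L[ℝ] E :=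
  ((fderiv ℝ C.Γ x).flip u).flip v - ((fderiv ℝ C.Γ x) u).flip v
      + (C.Γ x).flip (C.Γ x u v) - (C.Γ x u).comp ((C.Γ x).flip v)

theorem ricOp_apply {Ω : SympForm E} (C : SympConnection Ω) (x u v a : E) :
    ricOp C x u v a = curvOp C x a u v := by
  simp [ricOp, curvOp]

theorem ricci_eq {Ω : SympForm E} (C : SympConnection Ω) (x u v : E) :
    ricci C x u v = LinearMap.trace ℝ E (ricOp C x u v).toLinearMap := rfl

theorem fderiv_apply_const {X Y : Type*} [NormedAddCommGroup X] [NormedSpace ℝ X]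
    [NormedAddCommGroup Y] [NormedSpace ℝ Y] {F : E → X →L[ℝ] Y} {x : E}
    (hF : DifferentiableAt ℝ F x) (a : E) (u : X) :
    fderiv ℝ (fun y => F y u) x a = fderiv ℝ F x a u := by
  rw [fderiv_clm_apply hF (differentiableAt_const u)]
  simp

theorem smoothG' {Ω : SympForm E} (C : SympConnection Ω) : ContDiff ℝ ∞ (fderiv ℝ C.Γ) :=
  (contDiff_infty_iff_fderiv.1 C.smooth).2

theorem smoothCurv {Ω : SympForm E} (C : SympConnection Ω) (u v : E) :
    ContDiff ℝ ∞ (fun x => curvOp C x u v) := by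
  have h1 := smoothG' C
  have h2 : ContDiff ℝ ∞ C.Γ := C.smooth
  unfold curvOp
  exact ((((h1.clm_apply contDiff_const).clm_apply contDiff_const).sub
    ((h1.clm_apply contDiff_const).clm_apply contDiff_const)).add
    ((h2.clm_apply contDiff_const).clm_comp (h2.clm_apply contDiff_const))).sub
    ((h2.clm_apply contDiff_const).clm_comp (h2.clm_apply contDiff_const))

theorem smoothRicci [FiniteDimensional ℝ E] {Ω : SympForm E} (C : SympConnection Ω) (u v : E) :
    ContDiff ℝ ∞ (fun x => ricci C x u v) := by
  have h : ContDiff ℝ ∞ (fun x => ricOp C x u v) := by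
    rw [contDiff_clm_apply_iff]
    intro a
    simp only [ricOp_apply]
    exact (smoothCurv C a u).clm_apply contDiff_const
  let t : (E →L[ℝ] E) →L[ℝ] ℝ := LinearMap.toContinuousLinearMap
    ((LinearMap.trace ℝ E).comp (ContinuousLinearMap.coeLM ℝ))
  exact t.contDiff.comp h

theorem curv_add_left {Ω : SympForm E} (C : SympConnection Ω) (x u u' v : E) :
    curvOp C x (u + u') v = curvOp C x u v + curvOp C x u' v := by
  ext z; simp [curvOp]; abel
theorem curv_smul_left {Ω : SympForm E} (C : SympConnection Ω) (x : E) (r : ℝ) (u v : E) :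
    curvOp C x (r • u) v = r • curvOp C x u v := by
  ext z; simp [curvOp, smul_sub, smul_add]
theorem curv_skew_s1 {Ω : SympForm E} (C : SympConnection Ω) (x u v : E) :
    curvOp C x v u = - curvOp C x u v := by
  ext z; simp [curvOp]; abel

theorem ricOp_add_left {Ω : SympForm E} (C : SympConnection Ω) (x u u' v : E) :
    ricOp C x (u + u') v = ricOp C x u v + ricOp C x u' v := by
  ext z; simp only [ricOp_apply, add_apply]
  rw [curv_skew_s1, curv_add_left, curv_skew_s1 C x u z, curv_skew_s1 C x u' z]; simp; abel
theorem ricOp_smul_left {Ω : SympForm E} (C : SympConnection Ω) (x : E) (r : ℝ) (u v : E) :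
    ricOp C x (r • u) v = r • ricOp C x u v := by
  ext z; simp only [ricOp_apply, smul_apply]
  rw [curv_skew_s1, curv_smul_left, curv_skew_s1 C x u z]; simp
theorem ricOp_add_right {Ω : SympForm E} (C : SympConnection Ω) (x u v v' : E) :
    ricOp C x u (v + v') = ricOp C x u v + ricOp C x u v' := by
  ext z; simp only [ricOp_apply, add_apply, map_add]
theorem ricOp_smul_right {Ω : SympForm E} (C : SympConnection Ω) (x : E) (r : ℝ) (u v : E) :
    ricOp C x u (r • v) = r • ricOp C x u v := by
  ext z; simp only [ricOp_apply, smul_apply, map_smul]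

/-- The Ricci tensor as a field of continuous bilinear forms. -/
noncomputable def ricP [FiniteDimensional ℝ E] {Ω : SympForm E} (C : SympConnection Ω) (x : E) :
    E →L[ℝ] E →L[ℝ] ℝ :=
  LinearMap.toContinuousLinearMap ((LinearMap.toContinuousLinearMap
    (𝕜 := ℝ) (E := E) (F' := ℝ)).toLinearMap.comp (LinearMap.mk₂ ℝ (ricci C x)
      (fun u u' v => by simp only [ricci_eq, ricOp_add_left]; exact map_add _ _ _)
      (fun r u v => by simp only [ricci_eq, ricOp_smul_left]; exact map_smul _ _ _)
      (fun u v v' => by simp only [ricci_eq, ricOp_add_right]; exact map_add _ _ _)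
      (fun r u v => by simp only [ricci_eq, ricOp_smul_right]; exact map_smul _ _ _)))

theorem ricP_apply [FiniteDimensional ℝ E] {Ω : SympForm E} (C : SympConnection Ω) (x u v : E) :
    ricP C x u v = ricci C x u v := rfl

theorem smoothP [FiniteDimensional ℝ E] {Ω : SympForm E} (C : SympConnection Ω) :
    ContDiff ℝ ∞ (ricP C) := by
  rw [contDiff_clm_apply_iff]
  intro u
  rw [contDiff_clm_apply_iff]
  intro v
  exact smoothRicci C u v

theorem covRic_eq [FiniteDimensional ℝ E] {Ω : SympForm E} (C : SympConnection Ω) (x a u v : E) :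
    covDerivRic C x a u v = fderiv ℝ (ricP C) x a u v - ricP C x (C.Γ x a u) v
      - ricP C x u (C.Γ x a v) := by
  unfold covDerivRic
  have hd : DifferentiableAt ℝ (ricP C) x := (smoothP C).contDiffAt.differentiableAt (by simp)
  have : (fun y => ricci C y u v) = fun y => ricP C y u v := rfl
  rw [this, fderiv_apply_const (F := fun y => ricP C y u)
    (hd.clm_apply (differentiableAt_const u)), fderiv_apply_const hd]
  rfl

theorem diffΓ {Ω : SympForm E} (C : SympConnection Ω) (x : E) : DifferentiableAt ℝ C.Γ x :=
  C.smooth.contDiffAt.differentiableAt (by simp)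
theorem diffω (Ω : SympForm E) (x : E) : DifferentiableAt ℝ Ω.ω x :=
  Ω.smooth.contDiffAt.differentiableAt (by simp)

theorem fderiv_curv {Ω : SympForm E} (C : SympConnection Ω) (x a u v : E) :
    fderiv ℝ (fun y => curvOp C y u v) x a =
      fderiv ℝ (fderiv ℝ C.Γ) x a u v - fderiv ℝ (fderiv ℝ C.Γ) x a v u
      + (C.Γ x u).comp (fderiv ℝ C.Γ x a v) + (fderiv ℝ C.Γ x a u).comp (C.Γ x v)
      - (C.Γ x v).comp (fderiv ℝ C.Γ x a u) - (fderiv ℝ C.Γ x a v).comp (C.Γ x u) := by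
  have h2 : DifferentiableAt ℝ (fderiv ℝ C.Γ) x :=
    (smoothG' C).contDiffAt.differentiableAt (by simp)
  have h1 := diffΓ C x
  have c : ∀ u : E, HasFDerivAt (fun y => C.Γ y u) ((fderiv ℝ C.Γ x).flip u) x := fun u => by
    have := h1.hasFDerivAt.clm_apply (hasFDerivAt_const u x)
    simpa using this
  have d : ∀ u v : E, HasFDerivAt (fun y => fderiv ℝ C.Γ y u v)
      (((fderiv ℝ (fderiv ℝ C.Γ) x).flip u).flip v) x := fun u v => by
    have := (h2.hasFDerivAt.clm_apply (hasFDerivAt_const u x)).clm_apply (hasFDerivAt_const v x)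
    simpa using this
  have := (((d u v).sub (d v u)).add ((c u).clm_comp (c v))).sub ((c v).clm_comp (c u))
  have e := this.fderiv
  have e' : fderiv ℝ (fun y => curvOp C y u v) x = _ := e
  rw [e']
  simp
  abel

theorem covR_eq {Ω : SympForm E} (C : SympConnection Ω) (x a u v w z : E) :
    covDerivR C x a u v w z = Ω.ω x (fderiv ℝ (fun y => curvOp C y u v) x a w
      + C.Γ x a (curvOp C x u v w) - curvOp C x (C.Γ x a u) v w - curvOp C x u (C.Γ x a v) w
      - curvOp C x u v (C.Γ x a w)) z := by
  have hc : DifferentiableAt ℝ (fun y => curvOp C y u v) x :=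
    (smoothCurv C u v).contDiffAt.differentiableAt (by simp)
  have h := (((diffω Ω x).hasFDerivAt.clm_apply
    (hc.hasFDerivAt.clm_apply (hasFDerivAt_const w x))).clm_apply (hasFDerivAt_const z x)).fderiv
  unfold covDerivR
  have e : fderiv ℝ (fun y => Rlow C y u v w z) x = _ := h
  rw [e]
  simp [Rlow, C.parallel]
  ring

theorem second_bianchi_s1 {Ω : SympForm E} (C : SympConnection Ω) (x a u v w z : E) :
    covDerivR C x a u v w z + covDerivR C x u v a w z + covDerivR C x v a u w z = 0 := by
  simp only [covR_eq]
  rw [← add_apply, ← add_apply, ← map_add, ← map_add]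
  convert_to Ω.ω x 0 z = 0
  · congr 2
    have s : ∀ p q, fderiv ℝ (fderiv ℝ C.Γ) x p q = fderiv ℝ (fderiv ℝ C.Γ) x q p := fun p q =>
      (C.smooth.contDiffAt.isSymmSndFDerivAt (by simp; exact WithTop.coe_le_coe.2 le_top)).eq p q
    rw [fderiv_curv, fderiv_curv, fderiv_curv, C.symm x v a, C.symm x u a, C.symm x v u,
      curv_skew_s1 C x (C.Γ x a v) u, curv_skew_s1 C x (C.Γ x a u) v, curv_skew_s1 C x (C.Γ x u v) a,
      s u a, s v a, s v u]
    simp [curvOp]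
    abel
  · simp

end geometry
section final
open ContDiff
set_option maxSynthPendingDepth 10
set_option synthInstance.maxHeartbeats 400000
set_option maxHeartbeats 1000000

theorem Rlow_eq {n : ℕ} {Ω : SympForm E} {C : SympConnection Ω} (hW : WeylFlat n C)
    (x u v w z : E) :
    Rlow C x u v w z = (1 / ((n : ℝ) + 1)) * SDual.K (Ω.ω x) (ricci C x) u v w z :=
  sub_eq_zero.1 (hW x u v w z)

theorem covR_K [FiniteDimensional ℝ E] {n : ℕ} {Ω : SympForm E} {C : SympConnection Ω}
    (hW : WeylFlat n C) (x a u v w z : E) :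
    covDerivR C x a u v w z =
      (1 / ((n : ℝ) + 1)) * SDual.K (Ω.ω x) (covDerivRic C x a) u v w z := by
  have hP : ∀ u v, HasFDerivAt (fun y => ricP C y u v) (((fderiv ℝ (ricP C) x).flip u).flip v) x :=
    fun u v => by
      have hd : DifferentiableAt ℝ (ricP C) x := (smoothP C).contDiffAt.differentiableAt (by simp)
      have := (hd.hasFDerivAt.clm_apply (hasFDerivAt_const u x)).clm_apply (hasFDerivAt_const v x)
      simpa using this
  have hω : ∀ u v, HasFDerivAt (fun y => Ω.ω y u v) (((fderiv ℝ Ω.ω x).flip u).flip v) x :=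
    fun u v => by
      have := ((diffω Ω x).hasFDerivAt.clm_apply
        (hasFDerivAt_const u x)).clm_apply (hasFDerivAt_const v x)
      simpa using this
  have hR : (fun y => Rlow C y u v w z) = fun y => (1 / ((n : ℝ) + 1)) *
      ((1 / 2 : ℝ) * (Ω.ω y u w * ricP C y z v + Ω.ω y u z * ricP C y w v)
      - (1 / 2 : ℝ) * (Ω.ω y v w * ricP C y z u + Ω.ω y v z * ricP C y w u)
      + Ω.ω y u v * ricP C y w z) := by
    ext y
    rw [Rlow_eq hW]
    simp only [SDual.K, ricP_apply]
    ring
  have hd := ((((((hω u w).mul (hP z v)).add ((hω u z).mul (hP w v))).const_mul (1 / 2 : ℝ)).sub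
    ((((hω v w).mul (hP z u)).add ((hω v z).mul (hP w u))).const_mul (1 / 2 : ℝ))).add
    ((hω u v).mul (hP w z))).const_mul (1 / ((n : ℝ) + 1))
  have e : fderiv ℝ (fun y => Rlow C y u v w z) x = _ :=
    (congrArg (fun f => fderiv ℝ f x) hR).trans hd.fderiv
  unfold covDerivR
  rw [e]
  simp only [Rlow_eq hW, SDual.K, covRic_eq, ← ricP_apply]
  simp only [smul_apply, add_apply, sub_apply, ContinuousLinearMap.flip_apply, C.parallel,
    smul_eq_mul]
  ring

/-- Pointwise symplectic data. -/
theorem sdual_at [FiniteDimensional ℝ E] {n : ℕ} (hdim : Module.finrank ℝ E = 2 * n)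
    (Ω : SympForm E) (x : E) : ∃ b c : Fin (2 * n) → E, SDual (Ω.ω x) (2 * n) b c :=
  exists_sdual _ hdim _ (Ω.skew x) (Ω.nondeg x)

theorem ricci_symm [FiniteDimensional ℝ E] {n : ℕ} (hdim : Module.finrank ℝ E = 2 * n)
    {Ω : SympForm E} {C : SympConnection Ω} (hW : WeylFlat n C) (x u v : E) :
    ricci C x u v = ricci C x v u := by
  obtain ⟨b, c, h⟩ := sdual_at hdim Ω x
  refine h.symm_of_trace (ricci C x) (fun v => ⟨fun p q => ?_, fun r p => ?_⟩)
    (fun v => ⟨fun p q => ?_, fun r p => ?_⟩) (fun v w => ?_) u v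
  · simp only [← ricP_apply]; simp
  · simp only [← ricP_apply]; simp
  · simp only [← ricP_apply]; simp
  · simp only [← ricP_apply]; simp
  · rw [ricci_eq C x v w, h.tr]
    have : ∀ i, Ω.ω x ((ricOp C x v w).toLinearMap (b i)) (c i) =
      (1 / ((n : ℝ) + 1)) * SDual.K (Ω.ω x) (ricci C x) (b i) v w (c i) := fun i => by
      rw [← Rlow_eq hW, Rlow, ← ricOp_apply]; rfl
    simp only [this, ← Finset.mul_sum]
    have hn : (n : ℝ) + 1 ≠ 0 := by positivity
    push_cast
    field_simp

theorem covRic_symm [FiniteDimensional ℝ E] {n : ℕ} (hdim : Module.finrank ℝ E = 2 * n)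
    {Ω : SympForm E} {C : SympConnection Ω} (hW : WeylFlat n C) (x a u v : E) :
    covDerivRic C x a u v = covDerivRic C x a v u := by
  unfold covDerivRic
  simp only [fun y => ricci_symm hdim hW y u v]
  rw [ricci_symm hdim hW x (C.Γ x a u) v, ricci_symm hdim hW x u]
  ring

theorem covRic_lin1 [FiniteDimensional ℝ E] {Ω : SympForm E} (C : SympConnection Ω) (x u v : E) :
    IsLinearMap ℝ (fun a => covDerivRic C x a u v) :=
  ⟨fun p q => by simp only [covRic_eq]; simp; ring, fun r p => by simp only [covRic_eq]; simp; ring⟩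
theorem covRic_lin2 [FiniteDimensional ℝ E] {Ω : SympForm E} (C : SympConnection Ω) (x a v : E) :
    IsLinearMap ℝ (fun u => covDerivRic C x a u v) :=
  ⟨fun p q => by simp only [covRic_eq]; simp; ring, fun r p => by simp only [covRic_eq]; simp; ring⟩
theorem covRic_lin3 [FiniteDimensional ℝ E] {Ω : SympForm E} (C : SympConnection Ω) (x a u : E) :
    IsLinearMap ℝ (fun v => covDerivRic C x a u v) :=
  ⟨fun p q => by simp only [covRic_eq]; simp; ring, fun r p => by simp only [covRic_eq]; simp; ring⟩

theorem parallel_of_rho [FiniteDimensional ℝ E] {n : ℕ} (hdim : Module.finrank ℝ E = 2 * n)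
    {Ω : SympForm E} {C : SympConnection Ω} (hW : WeylFlat n C) (hp : Preferred C)
    (hρ : RhoZero C) : ParallelRicci C := by
  intro x a u v
  obtain ⟨b, c, h⟩ := sdual_at hdim Ω x
  have hn : (n : ℝ) + 1 ≠ 0 := by positivity
  refine h.T_formula (covDerivRic C x) (covRic_lin1 C x) (covRic_lin2 C x) (covRic_lin3 C x)
    (covRic_symm hdim hW x) (hp x) ?_ ?_ a u v
  · intro a u v w z
    have := second_bianchi_s1 C x a u v w z
    simp only [covR_K hW] at this
    rw [← mul_add, ← mul_add] at this
    rcases mul_eq_zero.1 this with h | h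
    · exfalso; exact (one_div_ne_zero hn) h
    · exact h
  · intro u
    obtain ⟨e, he⟩ := flat_equiv (Ω.ω x) (Ω.nondeg x)
    have he' : ∀ p q, Ω.ω x p q = e p q := fun p q => by rw [← he]; rfl
    let Tu : E →ₗ[ℝ] E →ₗ[ℝ] ℝ := LinearMap.mk₂ ℝ (fun a v => covDerivRic C x a u v)
      (fun p q v => (covRic_lin1 C x u v).map_add p q) (fun r p v => (covRic_lin1 C x u v).map_smul r p)
      (fun a p q => (covRic_lin3 C x a u).map_add p q) (fun r a p => (covRic_lin3 C x a u).map_smul r p)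
    let D : E →ₗ[ℝ] E := e.symm.toLinearEquiv.toLinearMap ∘ₗ
      (LinearMap.toContinuousLinearMap (𝕜 := ℝ) (E := E) (F' := ℝ)).toLinearMap ∘ₗ Tu
    have hD : ∀ w v, Ω.ω x (D w) v = covDerivRic C x w u v := fun w v => by
      rw [he']; simp [D, Tu]
    have := hρ x u D hD
    rw [h.tr] at this
    simpa only [hD] using this

theorem rho_of_parallel {Ω : SympForm E} {C : SympConnection Ω} (h : ParallelRicci C) :
    RhoZero C := by
  intro x u D hD
  have : D = 0 := by
    ext w
    apply Ω.nondeg x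
    intro v; rw [hD, h]
  rw [this]; simp

theorem parallel_iff_symm [FiniteDimensional ℝ E] {n : ℕ} (hdim : Module.finrank ℝ E = 2 * n)
    {Ω : SympForm E} {C : SympConnection Ω} (hW : WeylFlat n C) :
    ParallelRicci C ↔ LocallySymmetric C := by
  constructor
  · intro h x a u v w z
    rw [covR_K hW]; simp [SDual.K, h x]
  · intro h x a u v
    obtain ⟨b, c, hs⟩ := sdual_at hdim Ω x
    have hn : (n : ℝ) + 1 ≠ 0 := by positivity
    refine hs.eq_zero_of_K (covDerivRic C x a) (covRic_lin2 C x a) (covRic_lin3 C x a)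
      (covRic_symm hdim hW x a) (fun u v w z => ?_) u v
    have := h x a u v w z
    rw [covR_K hW] at this
    rcases mul_eq_zero.1 this with h | h
    · exfalso; exact (one_div_ne_zero hn) h
    · exact h

theorem exists_ricEnd [FiniteDimensional ℝ E] (Ω : SympForm E) (C : SympConnection Ω) :
    ∃ A : E → E →L[ℝ] E, ContDiff ℝ ∞ A ∧ ∀ x u v, Ω.ω x (A x u) v = ricci C x u v := by
  refine ⟨fun x => (ContinuousLinearMap.inverse (Ω.ω x)).comp (ricP C x), ?_, ?_⟩
  · refine ContDiff.clm_comp ?_ (smoothP C)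
    rw [contDiff_iff_contDiffAt]
    intro x
    obtain ⟨e, he⟩ := flat_equiv (Ω.ω x) (Ω.nondeg x)
    have := contDiffAt_map_inverse (n := ∞) e
    rw [he] at this
    exact this.comp x Ω.smooth.contDiffAt
  · intro x u v
    obtain ⟨e, he⟩ := flat_equiv (Ω.ω x) (Ω.nondeg x)
    simp only [← he, ContinuousLinearMap.inverse_equiv]
    simp [ricP_apply]

theorem ricEnd_deriv [FiniteDimensional ℝ E] {Ω : SympForm E} {C : SympConnection Ω}
    (hpar : ParallelRicci C) (A : E → E →L[ℝ] E) (hA : ContDiff ℝ ∞ A)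
    (hAr : ∀ x u v, Ω.ω x (A x u) v = ricci C x u v) (x a : E) :
    fderiv ℝ A x a = A x * C.Γ x a - C.Γ x a * A x := by
  ext u
  rw [← sub_eq_zero]
  apply Ω.nondeg x
  intro v
  have hd : DifferentiableAt ℝ A x := hA.contDiffAt.differentiableAt (by simp)
  have h := (((diffω Ω x).hasFDerivAt.clm_apply
    (hd.hasFDerivAt.clm_apply (hasFDerivAt_const u x))).clm_apply (hasFDerivAt_const v x)).fderiv
  have h2 := hpar x a u v
  unfold covDerivRic at h2
  simp only [← hAr] at h2
  rw [h] at h2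
  simp [C.parallel] at h2
  simp
  linarith

theorem ricEnd_comm [FiniteDimensional ℝ E] {Ω : SympForm E} {C : SympConnection Ω}
    (hpar : ParallelRicci C) (A : E → E →L[ℝ] E) (hA : ContDiff ℝ ∞ A)
    (hAr : ∀ x u v, Ω.ω x (A x u) v = ricci C x u v) (x u v : E) :
    A x * curvOp C x u v = curvOp C x u v * A x := by
  have hd : DifferentiableAt ℝ A x := hA.contDiffAt.differentiableAt (by simp)
  have hd2 : DifferentiableAt ℝ (fderiv ℝ A) x :=
    (contDiff_infty_iff_fderiv.1 hA).2.contDiffAt.differentiableAt (by simp)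
  have c : ∀ u : E, HasFDerivAt (fun y => C.Γ y u) ((fderiv ℝ C.Γ x).flip u) x := fun u => by
    have := (diffΓ C x).hasFDerivAt.clm_apply (hasFDerivAt_const u x)
    simpa using this
  have s : ∀ p q, fderiv ℝ (fderiv ℝ A) x p q = 
      A x * fderiv ℝ C.Γ x p q + (A x * C.Γ x p - C.Γ x p * A x) * C.Γ x q
      - (C.Γ x q * (A x * C.Γ x p - C.Γ x p * A x) + fderiv ℝ C.Γ x p q * A x) := fun p q => by
    rw [← fderiv_apply_const hd2]
    have e : (fun y => fderiv ℝ A y q) = fun y => (A y).comp (C.Γ y q) - (C.Γ y q).comp (A y) := by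
      ext1 y; exact ricEnd_deriv hpar A hA hAr y q
    have := ((hd.hasFDerivAt.clm_comp (c q)).sub ((c q).clm_comp hd.hasFDerivAt)).fderiv
    have this' : fderiv ℝ (fun y => fderiv ℝ A y q) x = _ :=
      (congrArg (fun f => fderiv ℝ f x) e).trans this
    rw [this', ← ricEnd_deriv hpar A hA hAr x p]
    simp [ContinuousLinearMap.mul_def]
  have sy : fderiv ℝ (fderiv ℝ A) x u v = fderiv ℝ (fderiv ℝ A) x v u :=
    (hA.contDiffAt.isSymmSndFDerivAt (by simp; exact WithTop.coe_le_coe.2 le_top)).eq u v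
  rw [s, s, ← sub_eq_zero] at sy
  rw [← sub_eq_zero, ← sy]
  simp only [curvOp, ← ContinuousLinearMap.mul_def]
  noncomm_ring

theorem ricEnd_sq [FiniteDimensional ℝ E] {n : ℕ} (hn : 1 ≤ n)
    (hdim : Module.finrank ℝ E = 2 * n)
    {Ω : SympForm E} {C : SympConnection Ω} (hW : WeylFlat n C)
    (hpar : ParallelRicci C) (A : E → E →L[ℝ] E) (hA : ContDiff ℝ ∞ A)
    (hAr : ∀ x u v, Ω.ω x (A x u) v = ricci C x u v) (x : E) :
    A x * A x = (LinearMap.trace ℝ E (A x * A x : E →L[ℝ] E).toLinearMap / (2 * n)) •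
      (1 : E →L[ℝ] E) := by
  obtain ⟨b, c, h⟩ := sdual_at hdim Ω x
  have hn1 : (n : ℝ) + 1 ≠ 0 := by positivity
  have hn0 : (n : ℝ) ≠ 0 := by positivity
  have hs : ∀ u v, Ω.ω x (A x u) v = Ω.ω x (A x v) u := fun u v => by
    rw [hAr, hAr, ricci_symm hdim hW]
  have key := h.A_sq (A x) hs (fun u v p z => by
    have hK : ∀ p q, Ω.ω x (curvOp C x u v p) q = _ := fun p q => Rlow_eq hW x u v p q
    have hr : (fun u v => Ω.ω x (A x u) v) = ricci C x := by
      ext u v; exact hAr x u v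
    have cm : A x (curvOp C x u v p) = curvOp C x u v (A x p) := by
      have := ricEnd_comm hpar A hA hAr x u v
      exact congrArg (fun L : E →L[ℝ] E => L p) this
    have cm' : A x (curvOp C x u v z) = curvOp C x u v (A x z) := by
      have := ricEnd_comm hpar A hA hAr x u v
      exact congrArg (fun L : E →L[ℝ] E => L z) this
    rw [hr]
    have sk : ∀ s t, SDual.K (Ω.ω x) (ricci C x) u v s t = SDual.K (Ω.ω x) (ricci C x) u v t s := by
      intro s t
      unfold SDual.K
      rw [ricci_symm hdim hW x s t]; ring
    have e1 := hK p (A x z)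
    have e2 := hK (A x p) z
    rw [← cm, hs, Ω.skew] at e2
    rw [e1, sk (A x p) z] at e2
    field_simp at e2
    linarith)
  ext u
  rw [← sub_eq_zero]
  apply Ω.nondeg x
  intro v
  have k := key u v
  rw [h.tr]
  push_cast at k
  simp at k ⊢
  field_simp
  linarith

end final

/-- For a symplectically flat symplectic connection (vanishing symplectic Weyl
tensor and `∇_{(i}R_{jk)} = 0`) on a `2n`-dimensional symplectic manifold, the following are
equivalent: (1) the curvature one-form `ρ_i = ∇^p R_{ip}` vanishes; (2) the Ricci tensor is
parallel; (3) `∇` is locally symmetric.  Moreover, when these hold, the Ricci endomorphism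
`A` (characterized by `Ω(A u, v) = Ric(u,v)`) satisfies `A ∘ A = -r • id` for a constant `r`
with `2nr = R_{pq}R^{pq}` (the latter being `-tr(A ∘ A)` for any linear packaging `B` of `A`). -/
theorem statement_1 {E : Type*} [NormedAddCommGroup E] [NormedSpace ℝ E]
    [FiniteDimensional ℝ E]
    (n : ℕ) (hn : 1 ≤ n) (hdim : Module.finrank ℝ E = 2 * n)
    (Ω : SympForm E) (C : SympConnection Ω)
    (hW : WeylFlat n C) (hpref : Preferred C) :
    ((RhoZero C ↔ ParallelRicci C) ∧ (ParallelRicci C ↔ LocallySymmetric C))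
    ∧ (RhoZero C →
        ∀ A : E → E → E, (∀ x u v, Ω.ω x (A x u) v = ricci C x u v) →
        ∃ r : ℝ, (∀ x u, A x (A x u) = -r • u) ∧
          ∀ x, ∀ B : E →ₗ[ℝ] E, (∀ u, B u = A x u) →
            2 * (n : ℝ) * r = - LinearMap.trace ℝ E (B ∘ₗ B)) := by
  have iff1 : RhoZero C ↔ ParallelRicci C := ⟨parallel_of_rho hdim hW hpref, rho_of_parallel⟩
  refine ⟨⟨iff1, parallel_iff_symm hdim hW⟩, fun hρ A hA => ?_⟩
  have hpar := iff1.1 hρ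
  obtain ⟨L, hL, hLr⟩ := exists_ricEnd Ω C
  have hAL : ∀ x u, A x u = L x u := fun x u => by
    rw [← sub_eq_zero]
    apply Ω.nondeg x
    intro v
    rw [map_sub, sub_apply, hA, hLr, sub_self]
  have hn0 : (n : ℝ) ≠ 0 := by positivity
  have hsq := ricEnd_sq hn hdim hW hpar L hL hLr
  have hdiff : Differentiable ℝ L := hL.differentiable (by simp)
  have hconst : ∀ x, (L x).comp (L x) = (L 0).comp (L 0) := by
    intro x
    refine is_const_of_fderiv_eq_zero (𝕜 := ℝ) (f := fun y => (L y).comp (L y))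
      (hdiff.clm_comp hdiff) (fun y => ?_) x 0
    have := ((hdiff y).hasFDerivAt.clm_comp (hdiff y).hasFDerivAt).fderiv
    rw [this]
    ext1 a
    have e : L y * fderiv ℝ L y a + fderiv ℝ L y a * L y = 0 := by
      rw [ricEnd_deriv hpar L hL hLr]
      have e1 : L y * (L y * C.Γ y a - C.Γ y a * L y) + (L y * C.Γ y a - C.Γ y a * L y) * L y
        = (L y * L y) * C.Γ y a - C.Γ y a * (L y * L y) := by noncomm_ring
      rw [e1, hsq y]
      simp
    simpa [ContinuousLinearMap.mul_def] using e
  set t := LinearMap.trace ℝ E (L 0 * L 0 : E →L[ℝ] E).toLinearMap with ht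
  refine ⟨-(t / (2 * n)), fun x u => ?_, fun x B hB => ?_⟩
  · rw [hAL, hAL, neg_neg]
    have h1 : L x (L x u) = L 0 (L 0 u) := congrArg (fun M : E →L[ℝ] E => M u) (hconst x)
    have h2 := congrArg (fun M : E →L[ℝ] E => M u) (hsq 0)
    rw [h1]
    exact h2
  · have : B ∘ₗ B = (L 0 * L 0 : E →L[ℝ] E).toLinearMap := by
      ext u
      have h1 : L x (L x u) = L 0 (L 0 u) := congrArg (fun M : E →L[ℝ] E => M u) (hconst x)
      simp [hB, hAL, h1]
    rw [this, ← ht]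
    field_simp
end

section
/- On a 2n-dimensional symplectic manifold (M, Ω), a symplectic connection ∇ is Weyl flat (W_{ijkl} = 0) if and only if there is a symmetric covariant 2-tensor field A_{ij} = A_{(ij)} such that for every p ∈ M and every 2-dimensional symplectic subspace L ⊂ T_pM there holds scurv_{p,L}(Z) = 4A(Z, Z) for all Z ∈ L. Moreover, in this case 2(n+1)A_{ij} = R_{ij}. -/
variable {E : Type*} [NormedAddCommGroup E] [NormedSpace ℝ E]

section helpers

set_option synthInstance.maxHeartbeats 400000
set_option maxSynthPendingDepth 5

variable {Ω : SympForm E}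

theorem h5_dGamma_symm (C : SympConnection Ω) (x a u v : E) :
    fderiv ℝ C.Γ x a u v = fderiv ℝ C.Γ x a v u := by
  have hG : HasFDerivAt C.Γ (fderiv ℝ C.Γ x) x :=
    ((C.smooth.differentiable (by simp)) x).hasFDerivAt
  have h1 := (hG.clm_apply (hasFDerivAt_const u x)).clm_apply (hasFDerivAt_const v x)
  have h2 := (hG.clm_apply (hasFDerivAt_const v x)).clm_apply (hasFDerivAt_const u x)
  have he : (fun y => C.Γ y u v) = fun y => C.Γ y v u := funext fun y => C.symm y u v
  rw [he] at h1
  have := congrArg (fun L => L a) (h1.unique h2)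
  simpa using this

theorem h5_curv_apply (C : SympConnection Ω) (x u v w : E) :
    curvOp C x u v w = fderiv ℝ C.Γ x u v w - fderiv ℝ C.Γ x v u w
      + C.Γ x u (C.Γ x v w) - C.Γ x v (C.Γ x u w) := by
  simp [curvOp]

theorem h5_curv_skew (C : SympConnection Ω) (x u v w : E) :
    curvOp C x u v w = - curvOp C x v u w := by
  simp only [h5_curv_apply]; abel

theorem h5_bianchi (C : SympConnection Ω) (x u v w : E) :
    curvOp C x u v w + curvOp C x v w u + curvOp C x w u v = 0 := by
  simp only [h5_curv_apply]
  rw [h5_dGamma_symm C x u v w, h5_dGamma_symm C x v w u, h5_dGamma_symm C x w u v,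
    C.symm x v w, C.symm x u w, C.symm x u v]
  abel

theorem h5_sndDeriv (C : SympConnection Ω) (x u v w z : E) :
    fderiv ℝ (fderiv ℝ Ω.ω) x u v w z =
      Ω.ω x (C.Γ x u (C.Γ x v w)) z + Ω.ω x (C.Γ x v w) (C.Γ x u z)
      + Ω.ω x (fderiv ℝ C.Γ x u v w) z
      + Ω.ω x (C.Γ x u w) (C.Γ x v z) + Ω.ω x w (C.Γ x u (C.Γ x v z))
      + Ω.ω x w (fderiv ℝ C.Γ x u v z) := by
  have hG : HasFDerivAt C.Γ (fderiv ℝ C.Γ x) x :=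
    ((C.smooth.differentiable (by simp)) x).hasFDerivAt
  have hO : HasFDerivAt Ω.ω (fderiv ℝ Ω.ω x) x :=
    ((Ω.smooth.differentiable (by simp)) x).hasFDerivAt
  have hd : ContDiff ℝ 1 (fderiv ℝ Ω.ω) :=
    Ω.smooth.fderiv_right (m := 1) (by
      have h2 : ((1 : ℕ∞) + 1) ≤ ⊤ := le_top
      exact WithTop.coe_le_coe.2 h2)
  have hDO : HasFDerivAt (fderiv ℝ Ω.ω) (fderiv ℝ (fderiv ℝ Ω.ω) x) x :=
    ((hd.differentiable (by simp)) x).hasFDerivAt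
  have hGw := (hG.clm_apply (hasFDerivAt_const v x)).clm_apply (hasFDerivAt_const w x)
  have hGz := (hG.clm_apply (hasFDerivAt_const v x)).clm_apply (hasFDerivAt_const z x)
  have h1 := ((hDO.clm_apply (hasFDerivAt_const v x)).clm_apply
    (hasFDerivAt_const w x)).clm_apply (hasFDerivAt_const z x)
  have h2 := ((hO.clm_apply hGw).clm_apply (hasFDerivAt_const z x)).add
    ((hO.clm_apply (hasFDerivAt_const w x)).clm_apply hGz)
  have he : (fun y => fderiv ℝ Ω.ω y v w z) =
      fun y => Ω.ω y (C.Γ y v w) z + Ω.ω y w (C.Γ y v z) :=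
    funext fun y => C.parallel y v w z
  rw [he] at h1
  have := congrArg (fun L => L u) (h1.unique h2)
  simp [C.parallel] at this
  rw [this]; ring

theorem h5_R_symm (C : SympConnection Ω) (x u v w z : E) :
    Rlow C x u v w z = Rlow C x u v z w := by
  have hs : IsSymmSndFDerivAt ℝ Ω.ω x :=
    (Ω.smooth.contDiffAt).isSymmSndFDerivAt (by
      have h2 : (2 : ℕ∞) ≤ ⊤ := le_top
      simp only [minSmoothness_of_isRCLikeNormedField]
      exact WithTop.coe_le_coe.2 h2)
  have h := congrArg (fun L : E →L[ℝ] E →L[ℝ] ℝ => L w z) (hs u v)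
  simp only [h5_sndDeriv C] at h
  have e : Rlow C x u v z w = - Ω.ω x w (curvOp C x u v z) := Ω.skew _ _ _
  rw [e]
  simp only [Rlow, h5_curv_apply, map_add, map_sub, add_apply,
    sub_apply]
  linarith

variable [FiniteDimensional ℝ E]

noncomputable def h5_B (Ω : SympForm E) (x : E) : E ≃ₗ[ℝ] Module.Dual ℝ E :=
  LinearMap.linearEquivOfInjective
    ((ContinuousLinearMap.coeLM ℝ).comp (Ω.ω x).toLinearMap)
    (by
      rw [← LinearMap.ker_eq_bot, LinearMap.ker_eq_bot']
      intro u hu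
      exact Ω.nondeg x u fun v => congrArg (fun L : Module.Dual ℝ E => L v) hu)
    (Subspace.dual_finrank_eq).symm

theorem h5_B_apply (x u v : E) : h5_B Ω x u v = Ω.ω x u v := rfl

theorem h5_trace_zero (x : E) (D : E →ₗ[ℝ] E)
    (h : ∀ p z, Ω.ω x (D p) z = Ω.ω x (D z) p) : LinearMap.trace ℝ E D = 0 := by
  have h1 : (h5_B Ω x).conj D = - Module.Dual.transpose (R := ℝ) D := by
    ext f z
    obtain ⟨p, rfl⟩ := (h5_B Ω x).surjective f
    simp only [LinearEquiv.conj_apply, LinearMap.comp_apply, LinearEquiv.coe_coe,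
      LinearEquiv.symm_apply_apply, h5_B_apply, LinearMap.neg_apply,
      Module.Dual.transpose_apply]
    rw [h, Ω.skew]
  have h2 := congrArg (LinearMap.trace ℝ _) h1
  have h3 := (LinearMap.trace ℝ (Module.Dual ℝ E)).map_neg (Module.Dual.transpose (R := ℝ) D)
  rw [LinearMap.trace_conj', h3, LinearMap.trace_transpose'] at h2
  linarith

noncomputable def h5_ricOp (C : SympConnection Ω) (x u v : E) : E →ₗ[ℝ] E :=
  ((((fderiv ℝ C.Γ x).flip u).flip v - ((fderiv ℝ C.Γ x) u).flip v
      + (C.Γ x).flip (C.Γ x u v) - (C.Γ x u).comp ((C.Γ x).flip v)).toLinearMap)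

theorem h5_ricOp_apply (C : SympConnection Ω) (x u v p : E) :
    h5_ricOp C x u v p = curvOp C x p u v := by
  rw [h5_curv_apply]; simp [h5_ricOp]

theorem h5_ricci_eq (C : SympConnection Ω) (x u v : E) :
    ricci C x u v = LinearMap.trace ℝ E (h5_ricOp C x u v) := rfl

theorem h5_ricci_symm (C : SympConnection Ω) (x u v : E) :
    ricci C x u v = ricci C x v u := by
  have h : h5_ricOp C x u v - h5_ricOp C x v u = - (curvOp C x u v).toLinearMap := by
    ext p
    simp only [LinearMap.sub_apply, LinearMap.neg_apply, h5_ricOp_apply,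
      ContinuousLinearMap.coe_coe]
    have := h5_bianchi C x u v p
    rw [h5_curv_skew C x p v u]
    rw [← sub_eq_zero, ← this]; abel
  have h2 := congrArg (LinearMap.trace ℝ E) h
  rw [map_sub, map_neg, h5_trace_zero (Ω := Ω) x (curvOp C x u v).toLinearMap
    (fun p z => h5_R_symm C x u v p z)] at h2
  rw [h5_ricci_eq, h5_ricci_eq]; linarith

noncomputable def h5_A (n : ℕ) (C : SympConnection Ω) (x : E) : E →L[ℝ] E →L[ℝ] ℝ :=
  LinearMap.toContinuousLinearMap
    ((LinearMap.toContinuousLinearMap (𝕜 := ℝ) (E := E) (F' := ℝ)).toLinearMap.comp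
      (LinearMap.mk₂ ℝ (fun u v => (1 / (2 * ((n : ℝ) + 1))) * ricci C x u v)
        (by
          intro a b v
          have : h5_ricOp C x (a + b) v = h5_ricOp C x a v + h5_ricOp C x b v := by
            ext p; simp [h5_ricOp]; abel
          simp only [h5_ricci_eq, this, map_add]; ring)
        (by
          intro c a v
          have : h5_ricOp C x (c • a) v = c • h5_ricOp C x a v := by
            ext p; simp [h5_ricOp, smul_sub, smul_add]
          simp only [h5_ricci_eq, this, map_smul, smul_eq_mul]; ring)
        (by
          intro v a b
          have : h5_ricOp C x v (a + b) = h5_ricOp C x v a + h5_ricOp C x v b := by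
            ext p; simp [h5_ricOp]; abel
          simp only [h5_ricci_eq, this, map_add]; ring)
        (by
          intro c v a
          have : h5_ricOp C x v (c • a) = c • h5_ricOp C x v a := by
            ext p; simp [h5_ricOp, smul_sub, smul_add]
          simp only [h5_ricci_eq, this, map_smul, smul_eq_mul]; ring)))

theorem h5_A_apply (n : ℕ) (C : SympConnection Ω) (x u v : E) :
    h5_A n C x u v = (1 / (2 * ((n : ℝ) + 1))) * ricci C x u v := rfl

/-- The curvature model built from `A`. -/
noncomputable def h5_form (Ω : SympForm E) (x : E) (A : E →L[ℝ] E →L[ℝ] ℝ) (u v w z : E) : ℝ :=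
  Ω.ω x u w * A z v + Ω.ω x u z * A w v - (Ω.ω x v w * A z u + Ω.ω x v z * A w u)
    + 2 * (Ω.ω x u v * A w z)

theorem h5_ricci_of_form (n : ℕ) (hdim : Module.finrank ℝ E = 2 * n)
    (C : SympConnection Ω) (x : E) (A : E →L[ℝ] E →L[ℝ] ℝ) (hA : ∀ u v, A u v = A v u)
    (h : ∀ u v w z, Rlow C x u v w z = h5_form Ω x A u v w z) (u v : E) :
    2 * ((n : ℝ) + 1) * A u v = ricci C x u v := by
  set ρ : E →ₗ[ℝ] E := (h5_B Ω x).symm.toLinearMap.comp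
    ((ContinuousLinearMap.coeLM ℝ).comp A.toLinearMap) with hρ
  have hr : ∀ a z, Ω.ω x (ρ a) z = A a z := by
    intro a z
    rw [← h5_B_apply, hρ]
    simp
  have hop : h5_ricOp C x u v =
      ((Ω.ω x).flip v).toLinearMap.smulRight (ρ u) + A u v • LinearMap.id
      - (Ω.ω x u v) • ρ - (A v).toLinearMap.smulRight u
      + (2 : ℝ) • ((Ω.ω x).flip u).toLinearMap.smulRight (ρ v) := by
    ext p
    rw [← sub_eq_zero]
    apply Ω.nondeg x
    intro z
    rw [h5_ricOp_apply]
    have := h p u v z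
    unfold Rlow h5_form at this
    simp [this, hr]
    rw [hA z u, hA z p, hA v u]; ring
  rw [h5_ricci_eq, hop]
  have ht : LinearMap.trace ℝ E ρ = 0 := h5_trace_zero (Ω := Ω) x ρ (by
    intro p z; rw [hr, hr, hA])
  simp only [map_add, map_sub, map_smul, LinearMap.trace_smulRight, ht, LinearMap.trace_id, hdim,
    ContinuousLinearMap.coe_coe, ContinuousLinearMap.flip_apply, hr, smul_eq_mul]
  rw [hA v u]; push_cast; ring

theorem h5_form_of_scurv (C : SympConnection Ω) (x : E) (A : E →L[ℝ] E →L[ℝ] ℝ)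
    (hA : ∀ u v, A u v = A v u)
    (h : ∀ X Y, Ω.ω x X Y ≠ 0 →
          ∀ Z ∈ Submodule.span ℝ ({X, Y} : Set E), scurv C x X Y Z = 4 * A Z Z)
    (u v w z : E) : Rlow C x u v w z = h5_form Ω x A u v w z := by
  have R1 : ∀ a b c d e, Rlow C x (a + b) c d e = Rlow C x a c d e + Rlow C x b c d e := by
    intro a b c d e
    simp only [Rlow, h5_curv_apply, map_add, map_sub, add_apply,
      sub_apply]; ring
  have R12 : ∀ a b c d, Rlow C x a b c d = - Rlow C x b a c d := by
    intro a b c d; simp only [Rlow]; rw [h5_curv_skew]; simp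
  have R2 : ∀ a b c d e, Rlow C x c (a + b) d e = Rlow C x c a d e + Rlow C x c b d e := by
    intro a b c d e; rw [R12, R1, R12 a, R12 b]; ring
  have R3 : ∀ a b c d e, Rlow C x c d (a + b) e = Rlow C x c d a e + Rlow C x c d b e := by
    intro a b c d e; simp [Rlow]
  have R34 := h5_R_symm C x
  have R4 : ∀ a b c d e, Rlow C x c d e (a + b) = Rlow C x c d e a + Rlow C x c d e b := by
    intro a b c d e; simp [Rlow]
  have RB : ∀ a b c d, Rlow C x a b c d + Rlow C x b c a d + Rlow C x c a b d = 0 := by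
    intro a b c d
    simp only [Rlow]
    rw [← add_apply, ← add_apply, ← map_add, ← map_add,
      h5_bianchi]; simp
  -- the basic vanishing
  have key0 : ∀ X Y, Ω.ω x X Y ≠ 0 → Rlow C x X Y X X = 4 * Ω.ω x X Y * A X X := by
    intro X Y hXY
    have := h X Y hXY X (Submodule.subset_span (by simp))
    unfold scurv at this
    rw [div_eq_iff hXY] at this
    rw [this]; ring
  have key : ∀ X Y, Rlow C x X Y X X = 4 * Ω.ω x X Y * A X X := by
    intro X Y
    by_cases hXY : Ω.ω x X Y = 0
    · by_cases hX : X = 0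
      · subst hX; simp [Rlow]
      · obtain ⟨Y', hY'⟩ : ∃ Y', Ω.ω x X Y' ≠ 0 := by
          by_contra hc; push Not at hc; exact hX (Ω.nondeg x X hc)
        have h1 := key0 X Y' hY'
        have h2 := key0 X (Y + Y') (by rw [map_add, hXY, zero_add]; exact hY')
        rw [R2, map_add] at h2
        linarith
    · exact key0 X Y hXY
  have hsk := Ω.skew x
  set S : E → E → E → E → ℝ := fun a b c d => Rlow C x a b c d - h5_form Ω x A a b c d with hS
  have S1 : ∀ a b c d e, S (a + b) c d e = S a c d e + S b c d e := by
    intro a b c d e; simp only [hS, R1, h5_form, map_add, add_apply]; ring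
  have S3 : ∀ a b c d e, S c d (a + b) e = S c d a e + S c d b e := by
    intro a b c d e; simp only [hS, R3, h5_form, map_add, add_apply]; ring
  have S4 : ∀ a b c d e, S c d e (a + b) = S c d e a + S c d e b := by
    intro a b c d e; simp only [hS, R4, h5_form, map_add, add_apply]; ring
  have S12 : ∀ a b c d, S a b c d = - S b a c d := by
    intro a b c d; simp only [hS, h5_form]; rw [R12, hsk a b]; ring
  have S34 : ∀ a b c d, S a b c d = S a b d c := by
    intro a b c d; simp only [hS, h5_form]; rw [R34, hA c d]; ring
  have SB : ∀ a b c d, S a b c d + S b c a d + S c a b d = 0 := by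
    intro a b c d; simp only [hS, h5_form]
    have := RB a b c d
    rw [hA c b, hA c a, hA b a, hA d a, hA d b, hA d c, hsk c b, hsk c a, hsk b a]
    linarith
  have S0 : ∀ a b, S a b a a = 0 := by
    intro a b; simp only [hS, h5_form]
    have := key a b
    have h0 : Ω.ω x a a = 0 := by have := hsk a a; linarith
    rw [h0, hsk b a, this]; ring
  have P : ∀ y a b c, S a y b c + S b y a c + S c y a b = 0 := by
    intro y a b c
    have e1 := S0 (a + b + c) y
    have e2 := S0 (a + b) y
    have e3 := S0 (a + c) y
    have e4 := S0 (b + c) y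
    have e5 := S0 a y
    have e6 := S0 b y
    have e7 := S0 c y
    simp only [S1, S3, S4] at e1 e2 e3 e4
    have f1 := S34 a y b c
    have f2 := S34 b y a c
    have f3 := S34 c y a b
    linarith
  have : S u v w z = 0 := by
    have p1 := P v u w z
    have p2 := P u v w z
    have b1 := SB u v w z
    have b2 := SB u v z w
    have := S34 u v w z
    have := S34 z u v w
    have := S34 v z u w
    have := S34 w u v z
    have := S12 u v w z
    have := S12 u v z w
    have := S12 v w u z
    have := S12 w u v z
    have := S12 v z u w
    have := S12 z u v w
    linarith
  simp only [hS] at this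
  linarith

end helpers

/-- On a `2n`-dimensional symplectic manifold, a symplectic connection is Weyl
flat if and only if there is a symmetric covariant 2-tensor field `A` such that for every
point `x` and every 2-dimensional symplectic subspace `L` (spanned by `X, Y` with
`Ω(X,Y) ≠ 0`) one has `scurv_{x,L}(Z) = 4A(Z,Z)` for all `Z ∈ L`.  Moreover, any such `A`
satisfies `2(n+1)A = Ric`. -/
theorem statement_5 {E : Type*} [NormedAddCommGroup E] [NormedSpace ℝ E]
    [FiniteDimensional ℝ E]
    (n : ℕ) (hn : 1 ≤ n) (hdim : Module.finrank ℝ E = 2 * n)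
    (Ω : SympForm E) (C : SympConnection Ω) :
    (WeylFlat n C ↔
      ∃ A : E → E →L[ℝ] E →L[ℝ] ℝ, (∀ x u v, A x u v = A x v u) ∧
        ∀ x X Y, Ω.ω x X Y ≠ 0 →
          ∀ Z ∈ Submodule.span ℝ ({X, Y} : Set E), scurv C x X Y Z = 4 * A x Z Z)
    ∧ (∀ A : E → E →L[ℝ] E →L[ℝ] ℝ, (∀ x u v, A x u v = A x v u) →
        (∀ x X Y, Ω.ω x X Y ≠ 0 →
          ∀ Z ∈ Submodule.span ℝ ({X, Y} : Set E), scurv C x X Y Z = 4 * A x Z Z) →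
        ∀ x u v, 2 * ((n : ℝ) + 1) * A x u v = ricci C x u v) := by
  have hn0 : ((n : ℝ) + 1) ≠ 0 := by positivity
  have hmain : ∀ A : E → E →L[ℝ] E →L[ℝ] ℝ, (∀ x u v, A x u v = A x v u) →
        (∀ x X Y, Ω.ω x X Y ≠ 0 →
          ∀ Z ∈ Submodule.span ℝ ({X, Y} : Set E), scurv C x X Y Z = 4 * A x Z Z) →
        ∀ x u v, 2 * ((n : ℝ) + 1) * A x u v = ricci C x u v := by
    intro A hA h x
    exact h5_ricci_of_form n hdim C x (A x) (hA x) (h5_form_of_scurv C x (A x) (hA x) (h x))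
  refine ⟨⟨?_, ?_⟩, hmain⟩
  · intro hW
    refine ⟨h5_A n C, fun x u v => ?_, ?_⟩
    · rw [h5_A_apply, h5_A_apply, h5_ricci_symm]
    · intro x X Y hXY Z hZ
      have hR : Rlow C x X Y Z Z = h5_form Ω x (h5_A n C x) X Y Z Z := by
        have := hW x X Y Z Z
        unfold weyl at this
        rw [sub_eq_zero] at this
        rw [this]
        simp only [h5_form, h5_A_apply]
        field_simp
      unfold scurv
      rw [div_eq_iff hXY, hR]
      obtain ⟨a, b, rfl⟩ := Submodule.mem_span_pair.1 hZ
      have hs : h5_A n C x X Y = h5_A n C x Y X := by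
        rw [h5_A_apply, h5_A_apply, h5_ricci_symm]
      have hX : Ω.ω x X X = 0 := by have := Ω.skew x X X; linarith
      have hY : Ω.ω x Y Y = 0 := by have := Ω.skew x Y Y; linarith
      simp only [h5_form, map_add, map_smul, add_apply,
        smul_apply, smul_eq_mul, hX, hY]
      rw [Ω.skew x Y X, hs]; ring
  · rintro ⟨A, hA, h⟩ x u v w z
    have hr := hmain A hA h x
    have hR := h5_form_of_scurv C x (A x) (hA x) (h x) u v w z
    unfold weyl
    rw [hR, ← hr, ← hr, ← hr, ← hr, ← hr]
    unfold h5_form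
    field_simp
    ring
end

section
/- A symplectic connection ∇ on a symplectic manifold (M, Ω) has constant symplectic sectional curvature if and only if it is Weyl flat with parallel Ricci tensor, in which case it is locally symmetric (∇R = 0). -/
variable {E : Type*} [NormedAddCommGroup E] [NormedSpace ℝ E]

section Helpers

set_option maxSynthPendingDepth 3
set_option synthInstance.maxHeartbeats 200000

lemma fderiv_apply2 {F : Type*} [NormedAddCommGroup F] [NormedSpace ℝ F]
    {A : E → E →L[ℝ] E →L[ℝ] F} (x : E) (hA : DifferentiableAt ℝ A x) (v w : E) :
    HasFDerivAt (fun y => A y v w) (((fderiv ℝ A x).flip v).flip w) x := by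
  have h := (hA.hasFDerivAt.clm_apply (hasFDerivAt_const v x)).clm_apply (hasFDerivAt_const w x)
  refine h.congr_fderiv ?_
  ext p
  simp

lemma omega_diff (Ω : SympForm E) : Differentiable ℝ Ω.ω :=
  Ω.smooth.differentiable (by simp)

lemma gamma_diff {Ω : SympForm E} (C : SympConnection Ω) : Differentiable ℝ C.Γ :=
  C.smooth.differentiable (by simp)

lemma curvOp_apply {Ω : SympForm E} (C : SympConnection Ω) (x u v w : E) :
    curvOp C x u v w = fderiv ℝ C.Γ x u v w - fderiv ℝ C.Γ x v u w
      + C.Γ x u (C.Γ x v w) - C.Γ x v (C.Γ x u w) := by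
  simp [curvOp]

lemma dgamma_symm {Ω : SympForm E} (C : SympConnection Ω) (x a u v : E) :
    fderiv ℝ C.Γ x a u v = fderiv ℝ C.Γ x a v u := by
  have h1 := fderiv_apply2 x (gamma_diff C x) u v
  have h2 := fderiv_apply2 x (gamma_diff C x) v u
  have h3 : (fun y => C.Γ y u v) = (fun y => C.Γ y v u) := funext fun y => C.symm y u v
  rw [h3] at h1
  have := congrArg (fun L => L a) (h1.unique h2)
  simpa using this

lemma Rlow_skew {Ω : SympForm E} (C : SympConnection Ω) (x u v w z : E) :
    Rlow C x u v w z = - Rlow C x v u w z := by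
  simp only [Rlow, curvOp_apply, map_sub, map_add, _root_.sub_apply,
    _root_.add_apply]
  ring

lemma Rlow_bianchi {Ω : SympForm E} (C : SympConnection Ω) (x u v w z : E) :
    Rlow C x u v w z + Rlow C x v w u z + Rlow C x w u v z = 0 := by
  simp only [Rlow, curvOp_apply, map_sub, map_add, _root_.sub_apply,
    _root_.add_apply]
  rw [dgamma_symm C x u w v, dgamma_symm C x v w u, dgamma_symm C x w v u,
    C.symm x w u, C.symm x w v, C.symm x v u]
  ring

lemma second_deriv {Ω : SympForm E} (C : SympConnection Ω) (x a u v w : E) :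
    fderiv ℝ (fderiv ℝ Ω.ω) x a u v w =
      fderiv ℝ Ω.ω x a (C.Γ x u v) w + Ω.ω x (fderiv ℝ C.Γ x a u v) w
      + fderiv ℝ Ω.ω x a v (C.Γ x u w) + Ω.ω x v (fderiv ℝ C.Γ x a u w) := by
  have hd : DifferentiableAt ℝ (fderiv ℝ Ω.ω) x :=
    ((Ω.smooth.fderiv_right (m := 1) (by norm_cast)).differentiable (by simp)) x
  have h1 := ((hd.hasFDerivAt.clm_apply (hasFDerivAt_const u x)).clm_apply
    (hasFDerivAt_const v x)).clm_apply (hasFDerivAt_const w x)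
  have ho := (omega_diff Ω x).hasFDerivAt
  have hv := fderiv_apply2 x (gamma_diff C x) u v
  have hw := fderiv_apply2 x (gamma_diff C x) u w
  have h2 := ((ho.clm_apply hv).clm_apply (hasFDerivAt_const w x)).add
    ((ho.clm_apply (hasFDerivAt_const v x)).clm_apply hw)
  have h3 : (fun y => fderiv ℝ Ω.ω y u v w) =
      (fun y => Ω.ω y (C.Γ y u v) w) + (fun y => Ω.ω y v (C.Γ y u w)) :=
    funext fun y => C.parallel y u v w
  rw [h3] at h1
  have := congrArg (fun L => L a) (h1.unique h2)
  simp at this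
  linarith

lemma Rlow_symm {Ω : SympForm E} (C : SympConnection Ω) (x u v w z : E) :
    Rlow C x u v w z = Rlow C x u v z w := by
  have hs : fderiv ℝ (fderiv ℝ Ω.ω) x u v = fderiv ℝ (fderiv ℝ Ω.ω) x v u := by
    have := (Ω.smooth.contDiffAt (x := x)).isSymmSndFDerivAt (by simp; norm_cast)
    exact this u v
  have hs' : fderiv ℝ (fderiv ℝ Ω.ω) x u v w z = fderiv ℝ (fderiv ℝ Ω.ω) x v u w z := by rw [hs]
  rw [second_deriv C, second_deriv C] at hs'
  simp only [C.parallel] at hs'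
  have e : Ω.ω x w (curvOp C x u v z) = - Rlow C x u v z w := by rw [Rlow, Ω.skew]
  rw [curvOp_apply] at e
  simp only [map_sub, map_add] at e
  have e2 : Rlow C x u v w z = Ω.ω x (curvOp C x u v w) z := rfl
  rw [curvOp_apply] at e2
  simp only [map_sub, map_add, _root_.sub_apply,
    _root_.add_apply] at e2
  linarith

lemma Rlow_lin2 {Ω : SympForm E} (C : SympConnection Ω) (x u v v' w z : E) (c : ℝ) :
    Rlow C x u (v + c • v') w z = Rlow C x u v w z + c * Rlow C x u v' w z := by
  simp only [Rlow, curvOp_apply, map_sub, map_add, map_smul, _root_.sub_apply,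
    _root_.add_apply, _root_.smul_apply, smul_eq_mul]
  ring

lemma Rlow_lin1 {Ω : SympForm E} (C : SympConnection Ω) (x u u' v w z : E) (c : ℝ) :
    Rlow C x (u + c • u') v w z = Rlow C x u v w z + c * Rlow C x u' v w z := by
  rw [Rlow_skew, Rlow_lin2, Rlow_skew C x u v, Rlow_skew C x u' v]; ring

lemma Rlow_lin3 {Ω : SympForm E} (C : SympConnection Ω) (x u v w w' z : E) (c : ℝ) :
    Rlow C x u v (w + c • w') z = Rlow C x u v w z + c * Rlow C x u v w' z := by
  simp [Rlow]

lemma Rlow_lin4 {Ω : SympForm E} (C : SympConnection Ω) (x u v w z z' : E) (c : ℝ) :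
    Rlow C x u v w (z + c • z') = Rlow C x u v w z + c * Rlow C x u v w z' := by
  simp [Rlow]

/-- The model curvature tensor. -/
noncomputable def modelR (ω A : E →L[ℝ] E →L[ℝ] ℝ) (u v w z : E) : ℝ :=
  (ω u w * A z v + ω u z * A w v) / 2 - (ω v w * A z u + ω v z * A w u) / 2 + ω u v * A w z

/-- Algebraic core: a curvature-like tensor with `D X Y X X = 0` vanishes. -/
lemma alg_core (D : E → E → E → E → ℝ)
    (l1 : ∀ u u' v w z c, D (u + (c : ℝ) • u') v w z = D u v w z + c * D u' v w z)
    (l3 : ∀ u v w w' z c, D u v (w + (c : ℝ) • w') z = D u v w z + c * D u v w' z)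
    (l4 : ∀ u v w z z' c, D u v w (z + (c : ℝ) • z') = D u v w z + c * D u v w z')
    (hskew : ∀ u v w z, D u v w z = - D v u w z)
    (hsymm : ∀ u v w z, D u v w z = D u v z w)
    (hb : ∀ u v w z, D u v w z + D v w u z + D w u v z = 0)
    (h0 : ∀ u v, D u v u u = 0) (u v w z : E) : D u v w z = 0 := by
  have hp2 : ∀ a b y, 2 * D a y a b + D b y a a = 0 := by
    intro a b y
    have h1 := h0 (a + (1 : ℝ) • b) y
    have h2 := h0 (a + (-1 : ℝ) • b) y
    simp only [l1, l3, l4] at h1 h2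
    have h3 := h0 b y
    have h4 := hsymm a y a b
    have h5 := hsymm a y b a
    linarith [h0 a y, hsymm b y a b]
  have hp : ∀ a b c y, D a y b c + D b y a c + D c y a b = 0 := by
    intro a b c y
    have h1 := hp2 (a + (1 : ℝ) • b) c y
    simp only [l1, l3, l4] at h1
    linarith [hp2 a c y, hp2 b c y, hsymm c y a b]
  have := hp u w z v
  have := hp v w z u
  have := hp u v z w
  have := hp u v w z
  linarith [hb u v w z, hb u v z w, hb u w z v, hb v w z u, hskew u v w z, hskew u w v z,
    hskew u z v w, hskew v w u z, hskew v z u w, hskew w z u v,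
    hsymm u v w z, hsymm u w v z, hsymm u z v w, hsymm v w u z, hsymm v z u w, hsymm w z u v,
    hsymm v u w z, hsymm w u v z, hsymm z u v w, hsymm w v u z, hsymm z v u w, hsymm z w u v]

lemma const_model {Ω : SympForm E} (C : SympConnection Ω) (x : E) (A : E →L[ℝ] E →L[ℝ] ℝ)
    (hA : ∀ u v, A u v = A v u)
    (h : ∀ X Y, Ω.ω x X Y ≠ 0 →
      ∀ Z ∈ Submodule.span ℝ ({X, Y} : Set E), scurv C x X Y Z = A Z Z) (u v w z : E) :
    Rlow C x u v w z = (1 / 2) * modelR (Ω.ω x) A u v w z := by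
  have hself : ∀ u, Ω.ω x u u = 0 := fun u => by linarith [Ω.skew x u u]
  have key1 : ∀ X Y, Ω.ω x X Y ≠ 0 → Rlow C x X Y X X = Ω.ω x X Y * A X X := by
    intro X Y hXY
    have := h X Y hXY X (Submodule.subset_span (by simp))
    rw [scurv, div_eq_iff hXY] at this
    linarith
  have key : ∀ X Y, Rlow C x X Y X X = Ω.ω x X Y * A X X := by
    intro X Y
    by_cases hXY : Ω.ω x X Y = 0
    · by_cases hX : X = 0
      · subst hX; simp [Rlow]
      · have : ∃ Y', Ω.ω x X Y' ≠ 0 := by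
          by_contra hne
          push Not at hne
          exact hX (Ω.nondeg x X hne)
        obtain ⟨Y', hY'⟩ := this
        have e1 := key1 X Y' hY'
        have e2 := key1 X (Y + (1 : ℝ) • Y') (by simpa [hXY] using hY')
        rw [Rlow_lin2] at e2
        simp only [map_add, map_smul, smul_eq_mul] at e2
        linarith
    · exact key1 X Y hXY
  have := alg_core (fun u v w z => Rlow C x u v w z - (1 / 2) * modelR (Ω.ω x) A u v w z)
    ?_ ?_ ?_ ?_ ?_ ?_ ?_ u v w z
  · linarith
  · intro u u' v w z c
    simp only [Rlow_lin1, modelR, map_add, map_smul, _root_.add_apply,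
      _root_.smul_apply, smul_eq_mul]
    ring
  · intro u v w w' z c
    simp only [Rlow_lin3, modelR, map_add, map_smul, _root_.add_apply,
      _root_.smul_apply, smul_eq_mul]
    ring
  · intro u v w z z' c
    simp only [Rlow_lin4, modelR, map_add, map_smul, _root_.add_apply,
      _root_.smul_apply, smul_eq_mul]
    ring
  · intro u v w z
    simp only [modelR]
    rw [Rlow_skew, Ω.skew x u v]; ring
  · intro u v w z
    simp only [modelR]
    rw [Rlow_symm, hA w z]; ring
  · intro u v w z
    simp only [modelR]
    have := Rlow_bianchi C x u v w z
    rw [hA z v, hA z u, hA z w, hA w v, hA w u, hA v u, Ω.skew x w u, Ω.skew x w v, Ω.skew x v u]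
    linarith
  · intro u v
    simp only [modelR]
    rw [key, hself, Ω.skew x v u]; ring

lemma ricci_eq_trace {Ω : SympForm E} (C : SympConnection Ω) (x u v : E) (L : E →ₗ[ℝ] E)
    (hL : ∀ w, L w = curvOp C x w u v) : ricci C x u v = LinearMap.trace ℝ E L := by
  rw [ricci]
  congr 1
  ext w
  simp [hL, curvOp_apply]

lemma trace_rank_one [FiniteDimensional ℝ E] (f : E →L[ℝ] ℝ) (e : E) :
    LinearMap.trace ℝ E (f.toLinearMap.smulRight e) = f e := by
  simp

/-- Musical inverse: a bilinear form is represented by an endomorphism. -/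
lemma exists_repr [FiniteDimensional ℝ E] (Ω : SympForm E) (x : E) (A : E →L[ℝ] E →L[ℝ] ℝ) :
    ∃ a : E →ₗ[ℝ] E, ∀ u v, Ω.ω x (a u) v = A u v := by
  let f : E →ₗ[ℝ] (E →ₗ[ℝ] ℝ) :=
    { toFun := fun u => (Ω.ω x u).toLinearMap
      map_add' := by intros; ext; simp
      map_smul' := by intros; ext; simp }
  have hf : Function.Injective f := by
    rw [injective_iff_map_eq_zero]
    intro u hu
    exact Ω.nondeg x u fun v => by
      have := LinearMap.congr_fun hu v
      simpa [f] using this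
  have hdim : Module.finrank ℝ E = Module.finrank ℝ (E →ₗ[ℝ] ℝ) :=
    (Subspace.dual_finrank_eq (K := ℝ) (V := E)).symm
  let e := LinearEquiv.ofInjectiveOfFinrankEq f hf hdim
  let g : E →ₗ[ℝ] (E →ₗ[ℝ] ℝ) :=
    { toFun := fun u => (A u).toLinearMap
      map_add' := by intros; ext; simp
      map_smul' := by intros; ext; simp }
  refine ⟨e.symm.toLinearMap ∘ₗ g, fun u v => ?_⟩
  have h1 : f (e.symm (g u)) = g u := e.apply_symm_apply (g u)
  have := LinearMap.congr_fun h1 v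
  simpa [f, g] using this

lemma trace_zero_of_symm [FiniteDimensional ℝ E] (Ω : SympForm E) (x : E) (a : E →ₗ[ℝ] E)
    (ha : ∀ u v, Ω.ω x (a u) v = Ω.ω x (a v) u) : LinearMap.trace ℝ E a = 0 := by
  let f : E →ₗ[ℝ] (E →ₗ[ℝ] ℝ) :=
    { toFun := fun u => (Ω.ω x u).toLinearMap
      map_add' := by intros; ext; simp
      map_smul' := by intros; ext; simp }
  have hf : Function.Injective f := by
    rw [injective_iff_map_eq_zero]
    intro u hu
    exact Ω.nondeg x u fun v => by
      have := LinearMap.congr_fun hu v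
      simpa [f] using this
  have hdim : Module.finrank ℝ E = Module.finrank ℝ (E →ₗ[ℝ] ℝ) :=
    (Subspace.dual_finrank_eq (K := ℝ) (V := E)).symm
  let e : E ≃ₗ[ℝ] Module.Dual ℝ E := LinearEquiv.ofInjectiveOfFinrankEq f hf hdim
  have hconj : e.conj a = - Module.Dual.transpose a := by
    ext φ v
    obtain ⟨u, rfl⟩ := e.surjective φ
    have h1 : (e.conj a) (e u) = e (a u) := by simp [LinearEquiv.conj_apply]
    rw [h1]
    change Ω.ω x (a u) v = - Ω.ω x u (a v)
    rw [ha, Ω.skew]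
  have h1 := LinearMap.trace_conj' a e
  rw [hconj] at h1
  erw [map_neg, LinearMap.trace_transpose'] at h1
  linarith

lemma model_ricci [FiniteDimensional ℝ E] {n : ℕ} (hdim : Module.finrank ℝ E = 2 * n)
    {Ω : SympForm E} (C : SympConnection Ω) (x : E) (A : E →L[ℝ] E →L[ℝ] ℝ)
    (hA : ∀ u v, A u v = A v u) (c : ℝ)
    (h : ∀ u v w z, Rlow C x u v w z = c * modelR (Ω.ω x) A u v w z) (v w : E) :
    ricci C x v w = c * (n + 1) * A v w := by
  obtain ⟨a, ha⟩ := exists_repr Ω x A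
  have htr : LinearMap.trace ℝ E a = 0 :=
    trace_zero_of_symm Ω x a fun u v => by rw [ha, ha, hA]
  let L : E →ₗ[ℝ] E := c • ((-(1/2 : ℝ)) • (Ω.ω x w).toLinearMap.smulRight (a v)
    + ((1/2 : ℝ) * A w v) • LinearMap.id - ((1/2 : ℝ) * Ω.ω x v w) • a
    - (1/2 : ℝ) • (A w).toLinearMap.smulRight v
    - (Ω.ω x v).toLinearMap.smulRight (a w))
  have hL : ∀ u, L u = curvOp C x u v w := by
    intro u
    rw [← sub_eq_zero]
    apply Ω.nondeg x
    intro z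
    have := h u v w z
    rw [Rlow] at this
    rw [map_sub, _root_.sub_apply, this]
    simp only [L, modelR, LinearMap.smul_apply, LinearMap.sub_apply, LinearMap.add_apply,
      LinearMap.smulRight_apply, ContinuousLinearMap.coe_coe, LinearMap.id_apply, map_smul,
      map_sub, map_add, _root_.sub_apply, _root_.add_apply,
      _root_.smul_apply, smul_eq_mul, ha]
    rw [hA z v, hA z u, Ω.skew x w u, Ω.skew x u v]
    ring
  rw [ricci_eq_trace C x v w L hL]
  simp only [L, map_smul, map_sub, map_add, trace_rank_one, htr, LinearMap.trace_id, hdim,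
    smul_eq_mul]
  have e1 : Ω.ω x w (a v) = - A v w := by rw [Ω.skew, ha]
  have e2 : Ω.ω x v (a w) = - A v w := by rw [Ω.skew, ha, hA]
  rw [e1, e2, hA w v]
  push_cast
  ring

lemma model_covDeriv {Ω : SympForm E} (C : SympConnection Ω) (A : E → E →L[ℝ] E →L[ℝ] ℝ)
    (hA : IsParallelSym2 C A) (c : ℝ)
    (h : ∀ x u v w z, Rlow C x u v w z = c * modelR (Ω.ω x) (A x) u v w z) :
    LocallySymmetric C := by
  obtain ⟨_, hAd, hAp⟩ := hA
  intro x a u v w z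
  have ho := fun p q => fderiv_apply2 x (omega_diff Ω x) p q
  have hA' := fun p q => fderiv_apply2 x (hAd x) p q
  have e : (fun y => Rlow C y u v w z) = fun y => c *
     ((Ω.ω y u w * A y z v + Ω.ω y u z * A y w v) * (1 / 2)
      - (Ω.ω y v w * A y z u + Ω.ω y v z * A y w u) * (1 / 2) + Ω.ω y u v * A y w z) := by
    funext y; rw [h, modelR]; ring
  have hd := ((((((ho u w).mul (hA' z v)).add ((ho u z).mul (hA' w v))).mul_const (1 / 2)).sub
    ((((ho v w).mul (hA' z u)).add ((ho v z).mul (hA' w u))).mul_const (1 / 2))).add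
    ((ho u v).mul (hA' w z))).const_mul c
  rw [covDerivR, e]
  erw [hd.fderiv]
  simp only [h, modelR, _root_.sub_apply, _root_.add_apply,
      _root_.smul_apply, smul_eq_mul, ContinuousLinearMap.flip_apply,
      C.parallel, hAp]
  ring

lemma ricci_add_left {Ω : SympForm E} (C : SympConnection Ω) (x u u' v : E) :
    ricci C x (u + u') v = ricci C x u v + ricci C x u' v := by
  simp only [ricci, ← map_add]
  congr 1
  ext w
  simp
  abel

lemma ricci_smul_left {Ω : SympForm E} (C : SympConnection Ω) (x u v : E) (c : ℝ) :
    ricci C x (c • u) v = c * ricci C x u v := by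
  simp only [ricci, ← smul_eq_mul, ← map_smul]
  congr 1
  ext w
  simp [smul_sub, smul_add]

lemma ricci_add_right {Ω : SympForm E} (C : SympConnection Ω) (x u v v' : E) :
    ricci C x u (v + v') = ricci C x u v + ricci C x u v' := by
  simp only [ricci, ← map_add]
  congr 1
  ext w
  simp
  abel

lemma ricci_smul_right {Ω : SympForm E} (C : SympConnection Ω) (x u v : E) (c : ℝ) :
    ricci C x u (c • v) = c * ricci C x u v := by
  simp only [ricci, ← smul_eq_mul, ← map_smul]
  congr 1
  ext w
  simp [smul_sub, smul_add]

/-- The Ricci tensor as a continuous bilinear map. -/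
noncomputable def ricB [FiniteDimensional ℝ E] {Ω : SympForm E} (C : SympConnection Ω) (x : E) :
    E →L[ℝ] E →L[ℝ] ℝ :=
  LinearMap.toContinuousLinearMap
    { toFun := fun u => LinearMap.toContinuousLinearMap
        { toFun := fun v => ricci C x u v
          map_add' := ricci_add_right C x u
          map_smul' := fun c v => by simp [ricci_smul_right] }
      map_add' := fun u u' => by ext v; simp [ricci_add_left]
      map_smul' := fun c u => by ext v; simp [ricci_smul_left] }

lemma ricB_apply [FiniteDimensional ℝ E] {Ω : SympForm E} (C : SympConnection Ω) (x u v : E) :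
    ricB C x u v = ricci C x u v := by
  simp [ricB]

lemma ricB_diff [FiniteDimensional ℝ E] {Ω : SympForm E} (C : SympConnection Ω) :
    Differentiable ℝ (ricB C) := by
  have hG : ContDiff ℝ 1 C.Γ := C.smooth.of_le (by norm_cast)
  have hD : ContDiff ℝ 1 (fderiv ℝ C.Γ) := C.smooth.fderiv_right (by norm_cast)
  have : ContDiff ℝ 1 (ricB C) := by
    rw [contDiff_clm_apply_iff]
    intro u
    rw [contDiff_clm_apply_iff]
    intro v
    simp only [ricB_apply]
    let T : (E →L[ℝ] E) →L[ℝ] ℝ := LinearMap.toContinuousLinearMap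
      ((LinearMap.trace ℝ E) ∘ₗ ContinuousLinearMap.coeLM ℝ)
    have hM : ContDiff ℝ 1 (fun x => (((fderiv ℝ C.Γ x).flip u).flip v
      - ((fderiv ℝ C.Γ x) u).flip v
      + (C.Γ x).flip (C.Γ x u v) - (C.Γ x u).comp ((C.Γ x).flip v))) := by
      rw [contDiff_clm_apply_iff]
      intro p
      simp only [_root_.sub_apply, _root_.add_apply,
        ContinuousLinearMap.flip_apply, ContinuousLinearMap.comp_apply]
      fun_prop
    exact T.contDiff.comp hM
  exact this.differentiable (by simp)

lemma weyl_model [FiniteDimensional ℝ E] {n : ℕ} {Ω : SympForm E} (C : SympConnection Ω)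
    (x u v w z : E) : weyl n C x u v w z =
      Rlow C x u v w z - (1 / ((n : ℝ) + 1)) * modelR (Ω.ω x) (ricB C x) u v w z := by
  simp only [weyl, modelR, ricB_apply]

lemma modelR_smul (ω A : E →L[ℝ] E →L[ℝ] ℝ) (c : ℝ) (u v w z : E) :
    modelR ω (c • A) u v w z = c * modelR ω A u v w z := by
  simp [modelR]; ring

end Helpers

/-- A symplectic connection has constant symplectic sectional curvature if and
only if it is Weyl flat with parallel Ricci tensor, in which case it is locally symmetric. -/
theorem statement_6 {E : Type*} [NormedAddCommGroup E] [NormedSpace ℝ E]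
    [FiniteDimensional ℝ E]
    (n : ℕ) (hn : 1 ≤ n) (hdim : Module.finrank ℝ E = 2 * n)
    (Ω : SympForm E) (C : SympConnection Ω) :
    (HasConstScurv C ↔ (WeylFlat n C ∧ ParallelRicci C))
    ∧ (HasConstScurv C → LocallySymmetric C) := by
  have hn1 : (n : ℝ) + 1 ≠ 0 := by positivity
  have fwd : ∀ A : E → E →L[ℝ] E →L[ℝ] ℝ, IsParallelSym2 C A →
      (∀ x X Y, Ω.ω x X Y ≠ 0 →
        ∀ Z ∈ Submodule.span ℝ ({X, Y} : Set E), scurv C x X Y Z = A x Z Z) →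
      ∀ x u v w z, Rlow C x u v w z = (1 / 2) * modelR (Ω.ω x) (A x) u v w z :=
    fun A hA h x => const_model C x (A x) (hA.1 x) (h x)
  refine ⟨⟨?_, ?_⟩, ?_⟩
  · rintro ⟨A, hA, h⟩
    have hm := fwd A hA h
    have hric : ∀ x v w, ricci C x v w = (1 / 2) * (n + 1) * A x v w :=
      fun x => model_ricci hdim C x (A x) (hA.1 x) (1 / 2) (hm x)
    refine ⟨fun x u v w z => ?_, fun x w u v => ?_⟩
    · simp only [weyl, hm, hric, modelR]
      field_simp
      ring
    · have hd := (fderiv_apply2 x (hA.2.1 x) u v).const_mul ((1 / 2) * ((n : ℝ) + 1))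
      simp only [covDerivRic, hric]
      rw [hd.fderiv]
      simp only [_root_.smul_apply, smul_eq_mul, ContinuousLinearMap.flip_apply,
        hA.2.2]
      ring
  · rintro ⟨hW, hP⟩
    have hR : ∀ x u v w z, Rlow C x u v w z =
        (1 / ((n : ℝ) + 1)) * modelR (Ω.ω x) (ricB C x) u v w z := by
      intro x u v w z
      have := hW x u v w z
      rw [weyl_model] at this
      linarith
    have hsym : ∀ x u v, ricB C x u v = ricB C x v u := by
      intro x w z
      have hnt : Nontrivial E := Module.nontrivial_of_finrank_pos (R := ℝ) (by omega)
      obtain ⟨u, hu⟩ := exists_ne (0 : E)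
      have : ∃ v, Ω.ω x u v ≠ 0 := by
        by_contra hne
        push Not at hne
        exact hu (Ω.nondeg x u hne)
      obtain ⟨v, hv⟩ := this
      have h1 := Rlow_symm C x u v w z
      rw [hR, hR] at h1
      have h2 := mul_left_cancel₀ (one_div_ne_zero hn1) h1
      simp only [modelR] at h2
      apply mul_left_cancel₀ hv
      linarith
    refine ⟨fun x => (2 / ((n : ℝ) + 1)) • ricB C x, ⟨fun x u v => ?_, ?_, ?_⟩, ?_⟩
    · simp [hsym x u v]
    · set_option maxSynthPendingDepth 3 in
      exact (ricB_diff C).const_smul (2 / ((n : ℝ) + 1))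
    · intro x u v w
      set_option maxSynthPendingDepth 3 in
      have hd := (ricB_diff C x).hasFDerivAt.const_smul (2 / ((n : ℝ) + 1))
      have e := (fderiv_apply2 x (ricB_diff C x) v w).fderiv
      have hp := hP x u v w
      simp only [covDerivRic, ← ricB_apply] at hp
      rw [e] at hp
      erw [hd.fderiv]
      simp only [_root_.smul_apply, smul_eq_mul, ContinuousLinearMap.flip_apply]
        at hp ⊢
      rw [← mul_add]
      congr 1
      linarith
    · intro x X Y hXY Z hZ
      obtain ⟨a, b, rfl⟩ := Submodule.mem_span_pair.1 hZ
      have hself : ∀ u, Ω.ω x u u = 0 := fun u => by linarith [Ω.skew x u u]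
      rw [scurv, div_eq_iff hXY, hR]
      simp only [modelR, map_add, map_smul, _root_.add_apply,
        _root_.smul_apply, smul_eq_mul, hself, hsym x Y X, Ω.skew x Y X]
      field_simp
      ring
  · rintro ⟨A, hA, h⟩
    exact model_covDeriv C A hA (1 / 2) (fwd A hA h)
end
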